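/- arXiv:2503.11161 — 6 statements merged into one kernel-verified Lean document; each statement's English description precedes it below -/
import Mathlib

section
/- Let H be a real Hilbert space and suppose H × H = H♯ ⊕ H♭ is a direct sum decomposition into closed subspaces H♯ and H♭, both of which are Lagrange subspaces of H × H. Let L ⊆ H × H be a closed isotropic subspace such that the projector Π♯ onto H♯ along H♭, restricted to L, is a bijection from L onto H♯. Then L is a Lagrange subspace. -/
/-! Setting: `H` is a real Hilbert space; on `H × H` (with the product inner product,
realized as `WithLp 2 (H × H)`) the complex structure is `J (v, η) := (-η, v)`;
a closed subspace `L` is isotropic if `J L ⊆ Lᗮ` and Lagrange if `J L = Lᗮ`. -/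

/-- The complex structure `J (v, η) = (-η, v)` on `H × H`. -/
noncomputable def Jmap (H : Type*) [NormedAddCommGroup H] [InnerProductSpace ℝ H] :
    WithLp 2 (H × H) →ₗ[ℝ] WithLp 2 (H × H) :=
  (WithLp.linearEquiv 2 ℝ (H × H)).symm.toLinearMap ∘ₗ
    ((LinearMap.prod (-(LinearMap.snd ℝ H H)) (LinearMap.fst ℝ H H)) ∘ₗ
      (WithLp.linearEquiv 2 ℝ (H × H)).toLinearMap)

/-- A subspace `L ⊆ H × H` is Lagrange if `J L = Lᗮ`. -/
def IsLagrange {H : Type*} [NormedAddCommGroup H] [InnerProductSpace ℝ H]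
    (L : Submodule ℝ (WithLp 2 (H × H))) : Prop :=
  L.map (Jmap H) = Lᗮ

/-- A subspace `L ⊆ H × H` is isotropic if `J L ⊆ Lᗮ`. -/
def IsIsotropic {H : Type*} [NormedAddCommGroup H] [InnerProductSpace ℝ H]
    (L : Submodule ℝ (WithLp 2 (H × H))) : Prop :=
  L.map (Jmap H) ≤ Lᗮ

/-! Since `J` is surjective, applying it to `L + M = H × H` shows that `J L` and `J M` span. For
isotropic `L` and `M` these lie in `Lᗮ` and `Mᗮ`, which meet trivially, so `J L = Lᗮ` by modularity
of the lattice of subspaces. For `M = H♭ = ker Π♯`, the condition `L + M = H × H` says precisely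
that `Π♯` maps `L` onto `H♯`. -/

theorem eq_of_le_of_disjoint_of_codisjoint {α : Type*} [Lattice α] [BoundedOrder α]
    [IsModularLattice α] {a b c : α} (hab : a ≤ b) (hbc : Disjoint b c) (hac : Codisjoint a c) :
    a = b :=
  eq_of_le_of_inf_le_of_le_sup hab (hbc.le_bot.trans bot_le) (le_top.trans hac.top_le)

section Projection

variable {R E : Type*} [Ring R] [AddCommGroup E] [Module R E]
  {f : E →ₗ[R] E} {p q L : Submodule R E}

theorem ker_eq_of_isProj_of_codisjoint (hf : LinearMap.IsProj p f) (hq : q ≤ LinearMap.ker f)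
    (hpq : Codisjoint p q) : LinearMap.ker f = q :=
  (eq_of_le_of_disjoint_of_codisjoint hq hf.isCompl.disjoint.symm hpq.symm).symm

theorem codisjoint_of_isProj_of_map_eq (hf : LinearMap.IsProj p f) (hq : q ≤ LinearMap.ker f)
    (hpq : Codisjoint p q) (hL : L.map f = p) : Codisjoint L q := by
  rw [← ker_eq_of_isProj_of_codisjoint hf hq hpq, ← Submodule.map_eq_range_iff, hL, hf.range]

end Projection

section Orthogonal

variable {𝕜 E : Type*} [RCLike 𝕜] [NormedAddCommGroup E] [InnerProductSpace 𝕜 E]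
  {L M : Submodule 𝕜 E}

theorem disjoint_orthogonal_of_codisjoint (h : Codisjoint L M) : Disjoint Lᗮ Mᗮ := by
  rw [disjoint_iff, Submodule.inf_orthogonal, h.eq_top, Submodule.top_orthogonal_eq_bot]

theorem map_eq_orthogonal_of_codisjoint {J : E →ₗ[𝕜] E} (hJ : Function.Surjective J)
    (hL : L.map J ≤ Lᗮ) (hM : M.map J ≤ Mᗮ) (h : Codisjoint L M) : L.map J = Lᗮ := by
  have h_disj : Disjoint Lᗮ (M.map J) := (disjoint_orthogonal_of_codisjoint h).mono_right hM
  have h_codisj : Codisjoint (L.map J) (M.map J) := Submodule.codisjoint_map hJ h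
  exact eq_of_le_of_disjoint_of_codisjoint hL h_disj h_codisj

end Orthogonal

section Lagrange

variable {H : Type*} [NormedAddCommGroup H] [InnerProductSpace ℝ H]

theorem Jmap_Jmap (x : WithLp 2 (H × H)) : Jmap H (Jmap H x) = -x := by
  apply (WithLp.linearEquiv 2 ℝ (H × H)).injective
  ext <;> simp [Jmap]

theorem Jmap_surjective : Function.Surjective (Jmap H) := fun x =>
  ⟨-Jmap H x, by rw [map_neg, Jmap_Jmap, neg_neg]⟩

theorem IsLagrange.isIsotropic {L : Submodule ℝ (WithLp 2 (H × H))} (hL : IsLagrange L) :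
    IsIsotropic L :=
  le_of_eq hL

theorem stmt3_general {L M : Submodule ℝ (WithLp 2 (H × H))} (hL : IsIsotropic L)
    (hM : IsIsotropic M) (hLM : Codisjoint L M) : IsLagrange L :=
  map_eq_orthogonal_of_codisjoint Jmap_surjective hL hM hLM

end Lagrange

/-- Suppose `H × H = Hs ⊕ Hb` is a direct sum decomposition into
closed subspaces, both Lagrange, and `Pj` is the (bounded) projector onto `Hs` along
`Hb`.  If `L` is a closed isotropic subspace such that `Pj` restricted to `L` is a
bijection from `L` onto `Hs`, then `L` is Lagrange. -/
theorem stmt3 {H : Type*} [NormedAddCommGroup H] [InnerProductSpace ℝ H] [CompleteSpace H]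
    (Hs Hb : Submodule ℝ (WithLp 2 (H × H)))
    (hHsC : IsClosed (Hs : Set (WithLp 2 (H × H))))
    (hHbC : IsClosed (Hb : Set (WithLp 2 (H × H))))
    (hdisj : Hs ⊓ Hb = ⊥) (hspan : Hs ⊔ Hb = ⊤)
    (hHsL : IsLagrange Hs) (hHbL : IsLagrange Hb)
    (Pj : WithLp 2 (H × H) →L[ℝ] WithLp 2 (H × H))
    (hPj_mem : ∀ x, Pj x ∈ Hs) (hPj_id : ∀ x ∈ Hs, Pj x = x) (hPj_ker : ∀ x ∈ Hb, Pj x = 0)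
    (L : Submodule ℝ (WithLp 2 (H × H)))
    (hLC : IsClosed (L : Set (WithLp 2 (H × H)))) (hLiso : IsIsotropic L)
    (hbij : Set.BijOn Pj (L : Set (WithLp 2 (H × H))) (Hs : Set (WithLp 2 (H × H)))) :
    IsLagrange L :=
  stmt3_general hLiso hHbL.isIsotropic <| codisjoint_of_isProj_of_map_eq (f := Pj.toLinearMap)
    ⟨hPj_mem, hPj_id⟩ hPj_ker (codisjoint_iff.2 hspan) (SetLike.coe_injective hbij.image_eq)
end

section
/- Let H be a real Hilbert space, let L and L₀ be Lagrange subspaces of H × H, and let Π_L denote the orthogonal projection of H × H onto L. If Π_L restricted to L₀ is injective, then Π_L(L₀) is dense in L. -/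
/-! The orthogonal complement of `P_L L₀` is the preimage of `L₀ᗮ` under `P_L`, so `P_L L₀` is dense
in `L` as soon as `L ⊓ L₀ᗮ = ⊥`, while `P_L` is injective on `L₀` exactly when `L₀ ⊓ Lᗮ = ⊥`. If `L`
is isotropic (`J L ≤ Lᗮ`) and `L₀` is coisotropic (`J L₀ᗮ ≤ L₀`), then `J` embeds the first
intersection into the second. -/

section Projection

variable {𝕜 E : Type*} [RCLike 𝕜] [NormedAddCommGroup E] [InnerProductSpace 𝕜 E]

open Submodule

theorem orthogonal_map_of_isSymmetric {T : E →ₗ[𝕜] E} (hT : T.IsSymmetric) (M : Submodule 𝕜 E) :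
    (M.map T)ᗮ = Mᗮ.comap T := by
  ext x
  simp only [mem_orthogonal, mem_map, mem_comap, forall_exists_index, and_imp,
    forall_apply_eq_imp_iff₂, hT _ x]

theorem comap_starProjection_of_disjoint {L N : Submodule 𝕜 E} [L.HasOrthogonalProjection]
    (h : Disjoint L N) : N.comap L.starProjection.toLinearMap = Lᗮ := by
  ext x
  rw [mem_comap, ← starProjection_apply_eq_zero_iff]
  exact ⟨fun hx ↦ disjoint_def.mp h _ (starProjection_apply_mem L x) hx,
    fun hx ↦ hx ▸ N.zero_mem⟩

theorem topologicalClosure_map_starProjection_of_disjoint [CompleteSpace E]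
    {L M : Submodule 𝕜 E} [L.HasOrthogonalProjection] (h : Disjoint L Mᗮ) :
    (M.map L.starProjection.toLinearMap).topologicalClosure = L := by
  rw [← orthogonal_orthogonal_eq_closure,
    orthogonal_map_of_isSymmetric L.starProjection_isSymmetric,
    comap_starProjection_of_disjoint h, orthogonal_orthogonal]

theorem injOn_starProjection_iff_disjoint {L M : Submodule 𝕜 E} [L.HasOrthogonalProjection] :
    Set.InjOn L.starProjection (M : Set E) ↔ Disjoint M Lᗮ := by
  rw [← ker_starProjection]
  exact LinearMap.disjoint_ker_iff_injOn.symm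

theorem stmt5_general [CompleteSpace E] {J : E →ₗ[𝕜] E} (hJ : Function.Injective J)
    {L L₀ : Submodule 𝕜 E} (hL : L.map J ≤ Lᗮ) (hL₀ : L₀ᗮ.map J ≤ L₀)
    {PL : E → E} (hPL_mem : ∀ x, PL x ∈ L) (hPL_orth : ∀ x, x - PL x ∈ Lᗮ)
    (hinj : Set.InjOn PL (L₀ : Set E)) :
    closure (PL '' (L₀ : Set E)) = (L : Set E) := by
  have : L.HasOrthogonalProjection := ⟨fun x ↦ ⟨PL x, hPL_mem x, hPL_orth x⟩⟩
  obtain rfl : PL = L.starProjection :=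
    funext fun x ↦ (eq_starProjection_of_mem_orthogonal (hPL_mem x) (hPL_orth x)).symm
  have hL₀L : Disjoint L₀ Lᗮ := injOn_starProjection_iff_disjoint.mp hinj
  have hLL₀ : Disjoint L L₀ᗮ := disjoint_def.mpr fun x hxL hxL₀ ↦
    (map_eq_zero_iff J hJ).mp <|
      disjoint_def.mp hL₀L (J x) (hL₀ (mem_map_of_mem hxL₀)) (hL (mem_map_of_mem hxL))
  exact congrArg SetLike.coe (topologicalClosure_map_starProjection_of_disjoint hLL₀)

end Projection

section Lagrange

variable {H : Type*} [NormedAddCommGroup H] [InnerProductSpace ℝ H]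

theorem Jmap_comp_Jmap : Jmap H ∘ₗ Jmap H = -LinearMap.id := by
  ext x : 1
  apply WithLp.ofLp_injective
  simp [Jmap, Prod.ext_iff]

theorem Jmap_injective : Function.Injective (Jmap H) :=
  Function.Injective.of_comp (f := Jmap H) <| by
    rw [← LinearMap.coe_comp, Jmap_comp_Jmap]
    exact neg_injective

theorem IsLagrange.map_Jmap_orthogonal {L : Submodule ℝ (WithLp 2 (H × H))} (hL : IsLagrange L) :
    Lᗮ.map (Jmap H) = L := by
  rw [IsLagrange] at hL
  rw [← hL, ← Submodule.map_comp, Jmap_comp_Jmap, Submodule.map_neg, Submodule.map_id]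

end Lagrange

/-- Let `L`, `L₀` be Lagrange subspaces of `H × H` and let `PL` be the
orthogonal projection onto `L` (characterized by `PL x ∈ L` and `x - PL x ∈ Lᗮ`).
If `PL` restricted to `L₀` is injective, then `PL '' L₀` is dense in `L`. -/
theorem stmt5 {H : Type*} [NormedAddCommGroup H] [InnerProductSpace ℝ H] [CompleteSpace H]
    (L L₀ : Submodule ℝ (WithLp 2 (H × H)))
    (hLC : IsClosed (L : Set (WithLp 2 (H × H))))
    (hL₀C : IsClosed (L₀ : Set (WithLp 2 (H × H))))
    (hL : IsLagrange L) (hL₀ : IsLagrange L₀)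
    (PL : WithLp 2 (H × H) →L[ℝ] WithLp 2 (H × H))
    (hPL_mem : ∀ x, PL x ∈ L) (hPL_orth : ∀ x, x - PL x ∈ Lᗮ)
    (hinj : Set.InjOn PL (L₀ : Set (WithLp 2 (H × H)))) :
    closure (PL '' (L₀ : Set (WithLp 2 (H × H)))) = (L : Set (WithLp 2 (H × H))) :=
  stmt5_general Jmap_injective hL.le hL₀.map_Jmap_orthogonal.le hPL_mem hPL_orth hinj
end

section
/- Let H be a real Hilbert space, Q a complete metric space, and suppose H × H = H♯ ⊕ H♭ is a direct sum decomposition into closed subspaces. For each q ∈ Q let M(q) : H♯ → H♭ be a bounded linear operator and assume that L(q) := { z + M(q) z : z ∈ H♯ } is a Lagrange subspace of H × H for every q ∈ Q. Then the following are equivalent: (1) the map q ↦ L(q) is continuous with respect to the metric d(L₁, L₂) := ‖Π_{L₁} − Π_{L₂}‖ on the set of Lagrange subspaces, where Π_{L_i} is the orthogonal projection onto L_i and ‖·‖ is the operator norm on H × H; (2) the map q ↦ M(q) is continuous in the operator norm of bounded operators from H♯ to H♭. -/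
/-! The two continuity statements reduce to two estimates between operators `M, N : U → V`, where
`P_M` is the orthogonal projection onto the graph of `M` and `T_M z = z + M z`.  If `A` is the
projection onto `U` along `V`, then `(1 - P_N) P_M = (1 - P_N) (T_M - T_N) A P_M`, and
self-adjointness gives `‖P_M - P_N‖ ≤ 2 ‖A‖ ‖M - N‖`.  If `B` is the projection onto `V` along `U`,
then `B - N A` vanishes on the graph of `N` and takes `T_M z` to `(M - N) z`, so
`M - N = (B - N A) (P_M - P_N) T_M`; as `‖T_M‖ ≤ ‖T_N‖ + ‖M - N‖`, the last term can be absorbed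
once `P_M` is close to `P_N`. -/

open Filter Submodule Topology

section Graph

variable {R E : Type*} [Ring R] [AddCommGroup E] [Module R E] [TopologicalSpace E]
  [IsTopologicalAddGroup E] {U V : Submodule R E}

/-- The parametrization `z ↦ z + M z` of the graph of `M : U → V`, where `U` and `V` are subspaces
of the same space `E`. -/
def graphEmbedding (M : U →L[R] V) : U →L[R] E :=
  U.subtypeL + V.subtypeL ∘L M

/-- The graph `{z + M z : z ∈ U}` of `M : U → V`, as a subspace of the ambient space `E` rather
than of `U × V`. -/
def graphSubspace (M : U →L[R] V) : Submodule R E :=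
  LinearMap.range (graphEmbedding M).toLinearMap

/-- The operator `u + v ↦ v - N u`, for `u ∈ U` and `v ∈ V`, which measures the failure of a vector
to lie on the graph of `N : U → V`. -/
noncomputable def graphDefect (h : IsTopCompl U V) (N : U →L[R] V) : E →L[R] V :=
  V.projectionOntoL U h.symm - N ∘L U.projectionOntoL V h

lemma graphEmbedding_sub_graphEmbedding (M N : U →L[R] V) :
    graphEmbedding M - graphEmbedding N = V.subtypeL ∘L (M - N) := by
  rw [graphEmbedding, graphEmbedding, add_sub_add_left_eq_sub, ContinuousLinearMap.comp_sub]

lemma projectionOntoL_graphEmbedding (h : IsTopCompl U V) (M : U →L[R] V) (z : U) :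
    U.projectionOntoL V h (graphEmbedding M z) = z := by
  simp [graphEmbedding]

lemma graphDefect_graphEmbedding (h : IsTopCompl U V) (M N : U →L[R] V) (z : U) :
    graphDefect h N (graphEmbedding M z) = M z - N z := by
  simp [graphDefect, graphEmbedding]

lemma graphEmbedding_mem_graphSubspace (M : U →L[R] V) (z : U) :
    graphEmbedding M z ∈ graphSubspace M :=
  ⟨z, rfl⟩

lemma graphEmbedding_projectionOntoL_of_mem (h : IsTopCompl U V) {M : U →L[R] V} {x : E}
    (hx : x ∈ graphSubspace M) : graphEmbedding M (U.projectionOntoL V h x) = x := by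
  obtain ⟨z, rfl⟩ := hx
  exact congrArg _ (projectionOntoL_graphEmbedding h M z)

lemma graphDefect_eq_zero_of_mem (h : IsTopCompl U V) {N : U →L[R] V} {x : E}
    (hx : x ∈ graphSubspace N) : graphDefect h N x = 0 := by
  obtain ⟨z, rfl⟩ := hx
  exact (graphDefect_graphEmbedding h N N z).trans (sub_self _)

end Graph

lemma norm_graphEmbedding_sub_graphEmbedding {𝕜 E : Type*} [NontriviallyNormedField 𝕜]
    [SeminormedAddCommGroup E] [NormedSpace 𝕜 E] {U V : Submodule 𝕜 E} (M N : U →L[𝕜] V) :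
    ‖graphEmbedding M - graphEmbedding N‖ = ‖M - N‖ := by
  rw [graphEmbedding_sub_graphEmbedding]
  exact V.subtypeₗᵢ.norm_toContinuousLinearMap_comp

section InnerProductSpace

variable {𝕜 E : Type*} [RCLike 𝕜] [NormedAddCommGroup E] [InnerProductSpace 𝕜 E]

section StarProjection

variable (K L : Submodule 𝕜 E) [K.HasOrthogonalProjection] [L.HasOrthogonalProjection]

-- In an incomplete space the adjoint is unavailable, so symmetry is applied inside inner products.
lemma norm_starProjection_comp_le_swap :
    ‖K.starProjection ∘L L.starProjection‖ ≤ ‖L.starProjection ∘L K.starProjection‖ := by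
  refine ContinuousLinearMap.opNorm_le_of_re_inner_le (norm_nonneg _) fun x y hx hy ↦ ?_
  calc RCLike.re (inner 𝕜 (K.starProjection (L.starProjection x)) y)
      = RCLike.re (inner 𝕜 x ((L.starProjection ∘L K.starProjection) y)) := by
        rw [inner_starProjection_left_eq_right, inner_starProjection_left_eq_right]
        rfl
    _ ≤ ‖x‖ * ‖(L.starProjection ∘L K.starProjection) y‖ := re_inner_le_norm _ _
    _ ≤ ‖L.starProjection ∘L K.starProjection‖ := by
        rw [hx, one_mul]
        exact ContinuousLinearMap.unit_le_opNorm _ _ hy.le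

lemma norm_starProjection_sub_starProjection_le :
    ‖K.starProjection - L.starProjection‖ ≤
      ‖Lᗮ.starProjection ∘L K.starProjection‖ + ‖Kᗮ.starProjection ∘L L.starProjection‖ := by
  have hsplit : K.starProjection - L.starProjection =
      Lᗮ.starProjection ∘L K.starProjection - L.starProjection ∘L Kᗮ.starProjection := by
    ext x
    simp [starProjection_orthogonal']
  rw [hsplit]
  exact (norm_sub_le _ _).trans
    (add_le_add_right (norm_starProjection_comp_le_swap L Kᗮ) _)

end StarProjection

variable {U V : Submodule 𝕜 E}

section HasOrthogonalProjection

variable (h : IsTopCompl U V) (M N : U →L[𝕜] V)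
  [(graphSubspace M).HasOrthogonalProjection] [(graphSubspace N).HasOrthogonalProjection]

lemma norm_starProjection_orthogonal_graphSubspace_comp_le :
    ‖(graphSubspace N)ᗮ.starProjection ∘L (graphSubspace M).starProjection‖ ≤
      ‖U.projectionOntoL V h‖ * ‖M - N‖ := by
  set A := U.projectionOntoL V h
  set P := (graphSubspace M).starProjection
  have hfactor : (graphSubspace N)ᗮ.starProjection ∘L P =
      (graphSubspace N)ᗮ.starProjection ∘L (graphEmbedding M - graphEmbedding N) ∘L A ∘L P := by
    ext x
    have hM : graphEmbedding M (A (P x)) = P x :=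
      graphEmbedding_projectionOntoL_of_mem h (starProjection_apply_mem _ x)
    have hN : (graphSubspace N)ᗮ.starProjection (graphEmbedding N (A (P x))) = 0 :=
      starProjection_orthogonal_apply_eq_zero (graphEmbedding_mem_graphSubspace N _)
    simp [hM, hN]
  rw [hfactor]
  grw [ContinuousLinearMap.opNorm_comp_le, ContinuousLinearMap.opNorm_comp_le,
    ContinuousLinearMap.opNorm_comp_le, starProjection_norm_le, starProjection_norm_le,
    norm_graphEmbedding_sub_graphEmbedding, one_mul, mul_one, mul_comm]

lemma norm_starProjection_graphSubspace_sub_le :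
    ‖(graphSubspace M).starProjection - (graphSubspace N).starProjection‖ ≤
      2 * ‖U.projectionOntoL V h‖ * ‖M - N‖ := by
  have hMN := norm_starProjection_orthogonal_graphSubspace_comp_le h M N
  have hNM := norm_starProjection_orthogonal_graphSubspace_comp_le h N M
  rw [norm_sub_rev N M] at hNM
  linarith [norm_starProjection_sub_starProjection_le (graphSubspace M) (graphSubspace N)]

lemma graphDefect_comp_starProjection_sub_comp_graphEmbedding :
    graphDefect h N ∘L ((graphSubspace M).starProjection - (graphSubspace N).starProjection) ∘L
      graphEmbedding M = M - N := by
  ext1 z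
  have hM : (graphSubspace M).starProjection (graphEmbedding M z) = graphEmbedding M z :=
    starProjection_eq_self_iff.2 (graphEmbedding_mem_graphSubspace M z)
  have hN : graphDefect h N ((graphSubspace N).starProjection (graphEmbedding M z)) = 0 :=
    graphDefect_eq_zero_of_mem h (starProjection_apply_mem _ _)
  simp [hM, hN, graphDefect_graphEmbedding]

lemma norm_sub_le_of_starProjection_graphSubspace_sub_le
    (hclose : ‖graphDefect h N‖ *
      ‖(graphSubspace M).starProjection - (graphSubspace N).starProjection‖ ≤ 1 / 2) :
    ‖M - N‖ ≤ 2 * ‖graphEmbedding N‖ * (‖graphDefect h N‖ *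
      ‖(graphSubspace M).starProjection - (graphSubspace N).starProjection‖) := by
  set δ := ‖graphDefect h N‖ *
    ‖(graphSubspace M).starProjection - (graphSubspace N).starProjection‖ with hδ
  have hembedding : ‖graphEmbedding M‖ ≤ ‖graphEmbedding N‖ + ‖M - N‖ :=
    (norm_le_norm_add_norm_sub' _ _).trans
      (add_le_add_right (norm_graphEmbedding_sub_graphEmbedding M N).le _)
  have hself : ‖M - N‖ ≤ δ * (‖graphEmbedding N‖ + ‖M - N‖) := by
    conv_lhs => rw [← graphDefect_comp_starProjection_sub_comp_graphEmbedding h M N]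
    grw [ContinuousLinearMap.opNorm_comp_le, ContinuousLinearMap.opNorm_comp_le, ← mul_assoc,
      ← hδ, hembedding]
  have habsorb : δ * ‖M - N‖ ≤ 1 / 2 * ‖M - N‖ := by gcongr
  linarith

end HasOrthogonalProjection

lemma tendsto_starProjection_graphSubspace_iff (h : IsTopCompl U V) {ι : Type*} {l : Filter ι}
    (M : ι → U →L[𝕜] V) (N : U →L[𝕜] V) [∀ i, (graphSubspace (M i)).HasOrthogonalProjection]
    [(graphSubspace N).HasOrthogonalProjection] :
    Tendsto (fun i ↦ (graphSubspace (M i)).starProjection) l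
      (𝓝 (graphSubspace N).starProjection) ↔ Tendsto M l (𝓝 N) := by
  rw [tendsto_iff_norm_sub_tendsto_zero, tendsto_iff_norm_sub_tendsto_zero (f := M)]
  constructor <;> intro hlim
  · have hδ := hlim.const_mul ‖graphDefect h N‖
    rw [mul_zero] at hδ
    refine squeeze_zero' (.of_forall fun _ ↦ norm_nonneg _) ?_
      (by simpa only [mul_zero] using hδ.const_mul (2 * ‖graphEmbedding N‖))
    filter_upwards [hδ.eventually_le_const one_half_pos] with i hi
    exact norm_sub_le_of_starProjection_graphSubspace_sub_le h (M i) N hi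
  · exact squeeze_zero (fun _ ↦ norm_nonneg _)
      (fun i ↦ norm_starProjection_graphSubspace_sub_le h (M i) N)
      (by simpa only [mul_zero] using hlim.const_mul (2 * ‖U.projectionOntoL V h‖))

theorem stmt7_general (h : IsTopCompl U V) {Q : Type*} [TopologicalSpace Q]
    (M : Q → U →L[𝕜] V) (P : Q → E →L[𝕜] E) (hP_mem : ∀ q x, P q x ∈ graphSubspace (M q))
    (hP_orth : ∀ q x, x - P q x ∈ (graphSubspace (M q))ᗮ) :
    Continuous P ↔ Continuous M := by
  have (q : Q) : (graphSubspace (M q)).HasOrthogonalProjection :=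
    ⟨fun x ↦ ⟨P q x, hP_mem q x, hP_orth q x⟩⟩
  have hP (q : Q) : P q = (graphSubspace (M q)).starProjection := by
    ext x
    exact (eq_starProjection_of_mem_orthogonal (hP_mem q x) (hP_orth q x)).symm
  simp only [funext hP, continuous_iff_continuousAt, ContinuousAt,
    tendsto_starProjection_graphSubspace_iff h]

end InnerProductSpace

/-- Let `Q` be a complete metric space, `H × H = Hs ⊕ Hb` a direct
sum decomposition into closed subspaces, and for each `q ∈ Q` let
`M q : Hs → Hb` be a bounded operator whose graph `L q = { z + M q z : z ∈ Hs }`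
is a Lagrange subspace, with orthogonal projection `P q` onto `L q`.
Then `q ↦ P q` (equivalently, `q ↦ L q` in the metric `d`) is continuous in the
operator norm iff `q ↦ M q` is continuous in the operator norm. -/
theorem stmt7 {H : Type*} [NormedAddCommGroup H] [InnerProductSpace ℝ H] [CompleteSpace H]
    {Q : Type*} [MetricSpace Q] [CompleteSpace Q]
    (Hs Hb : Submodule ℝ (WithLp 2 (H × H)))
    (hHsC : IsClosed (Hs : Set (WithLp 2 (H × H))))
    (hHbC : IsClosed (Hb : Set (WithLp 2 (H × H))))
    (hdisj : Hs ⊓ Hb = ⊥) (hspan : Hs ⊔ Hb = ⊤)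
    (M : Q → (Hs →L[ℝ] Hb))
    (Lq : Q → Submodule ℝ (WithLp 2 (H × H)))
    (hLq : ∀ q, Lq q = LinearMap.range (Hs.subtypeL + Hb.subtypeL.comp (M q)).toLinearMap)
    (hLagrange : ∀ q, IsLagrange (Lq q))
    (P : Q → (WithLp 2 (H × H) →L[ℝ] WithLp 2 (H × H)))
    (hP_mem : ∀ q x, P q x ∈ Lq q) (hP_orth : ∀ q x, x - P q x ∈ (Lq q)ᗮ) :
    Continuous P ↔ Continuous M := by
  obtain rfl : Lq = fun q ↦ graphSubspace (M q) := funext hLq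
  exact stmt7_general (IsCompl.isTopCompl_of_isClosed ⟨disjoint_iff.2 hdisj, codisjoint_iff.2 hspan⟩
    hHsC hHbC) M P hP_mem hP_orth
end

section
/- In the exponential dichotomy setting, suppose z : ℝ → H satisfies, for all s ∈ ℝ and all t ≥ 0, the homogeneous invariance relations Π♯ z(s) = G♯(t) Π♯ z(s − t) and Π♭ z(s) = G♭(t) Π♭ z(s + t). If z is bounded and continuous on ℝ, or if z is (measurable and) an element of L²(ℝ; H) and the relations hold for almost every s, then z = 0 (identically in the continuous case, almost everywhere in the L² case). -/
open MeasureTheory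

/-!
Fix `s`. The invariance relations bound the two components of `z s` by a factor tending to `0`
times `‖z r‖`, as `r → -∞` for the stable component and as `r → +∞` for the other one. So `z s = 0`
as soon as `‖z r‖` does not tend to infinity at either end, and neither a bounded function nor an
`L^p` function (`p ≠ 0`) on the line has such a limit: in the latter case a superlevel set of
finite measure would contain a half-line.
-/

open Filter Topology

section Decay

variable {ι 𝕜 E F : Type*} [NontriviallyNormedField 𝕜] [SeminormedAddCommGroup E]
  [NormedSpace 𝕜 E] [NormedAddCommGroup F] [NormedSpace 𝕜 F] {l : Filter ι} {c : ι → ℝ}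

theorem eq_zero_of_norm_le_mul_norm {x : F} {y : ι → E} (hc : Tendsto c l (𝓝 0))
    (hy : ¬Tendsto (fun i => ‖y i‖) l atTop) (hx : ∀ᶠ i in l, ‖x‖ ≤ c i * ‖y i‖) : x = 0 := by
  obtain ⟨C, hC⟩ : ∃ C, ∃ᶠ i in l, ‖y i‖ < C := by
    simpa only [tendsto_atTop, not_forall, not_eventually, not_le] using hy
  have hlim : Tendsto (fun i => |c i| * C) l (𝓝 0) := by
    simpa only [abs_zero, zero_mul] using hc.abs.mul_const C
  refine norm_le_zero_iff.1 (ge_of_tendsto_of_frequently hlim ((hC.and_eventually hx).mono ?_))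
  rintro i ⟨hyC, hxi⟩
  calc
    ‖x‖ ≤ c i * ‖y i‖ := hxi
    _ ≤ |c i| * C := by gcongr; exact le_abs_self _

theorem eq_zero_of_norm_le_mul_norm_apply (P : E →L[𝕜] F) {x : F} {y : ι → E}
    (hc : Tendsto c l (𝓝 0)) (hy : ¬Tendsto (fun i => ‖y i‖) l atTop)
    (hx : ∀ᶠ i in l, ‖x‖ ≤ c i * ‖P (y i)‖) : x = 0 := by
  have hlim : Tendsto (fun i => |c i| * ‖P‖) l (𝓝 0) := by
    simpa only [abs_zero, zero_mul] using hc.abs.mul_const ‖P‖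
  refine eq_zero_of_norm_le_mul_norm hlim hy ?_
  filter_upwards [hx] with i hxi
  calc
    ‖x‖ ≤ c i * ‖P (y i)‖ := hxi
    _ ≤ |c i| * (‖P‖ * ‖y i‖) := by gcongr; exacts [le_abs_self _, P.le_opNorm _]
    _ = |c i| * ‖P‖ * ‖y i‖ := (mul_assoc _ _ _).symm

end Decay

section Lp

variable {α E : Type*} [MeasurableSpace α] {μ : Measure α} [NormedAddCommGroup E] {f : α → E}
  {p : ENNReal}

theorem exists_measure_le_norm_lt_top_of_memLp (hp : p ≠ 0) (hf : MemLp f p μ) :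
    ∃ C : ℝ, μ {a | C ≤ ‖f a‖} < ⊤ := by
  obtain rfl | hp_top := eq_or_ne p ⊤
  · have hsub : {a | (eLpNorm f ⊤ μ).toReal + 1 ≤ ‖f a‖} ⊆ {a | eLpNormEssSup f μ < ‖f a‖ₑ} := by
      intro a ha
      have hlt : (eLpNorm f ⊤ μ).toReal < ‖f a‖ := (lt_add_one _).trans_le ha
      rwa [← toReal_enorm, ENNReal.toReal_lt_toReal hf.eLpNorm_ne_top enorm_ne_top,
        eLpNorm_exponent_top] at hlt
    exact ⟨_, (measure_mono_null hsub meas_eLpNormEssSup_lt).trans_lt ENNReal.zero_lt_top⟩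
  · exact ⟨1, hf.meas_ge_lt_top hp hp_top one_ne_zero⟩

theorem not_tendsto_norm_atTop_of_memLp {l : Filter α} (hl : ∀ s ∈ l, μ s = ⊤) (hp : p ≠ 0)
    (hf : MemLp f p μ) : ¬Tendsto (fun a => ‖f a‖) l atTop := by
  obtain ⟨C, hC⟩ := exists_measure_le_norm_lt_top_of_memLp hp hf
  exact fun h => hC.ne (hl _ (h.eventually_ge_atTop C))

end Lp

theorem volume_eq_top_of_mem_atBot {s : Set ℝ} (hs : s ∈ atBot) : volume s = ⊤ :=
  have ⟨_, ha⟩ := mem_atBot_sets.1 hs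
  measure_mono_top ha Real.volume_Iic

theorem volume_eq_top_of_mem_atTop {s : Set ℝ} (hs : s ∈ atTop) : volume s = ⊤ :=
  have ⟨_, ha⟩ := mem_atTop_sets.1 hs
  measure_mono_top ha Real.volume_Ici

theorem tendsto_mul_exp_neg_mul_atTop (M : ℝ) {ε : ℝ} (hε : 0 < ε) :
    Tendsto (fun t => M * Real.exp (-ε * t)) atTop (𝓝 0) := by
  have hlin : Tendsto (fun t => -ε * t) atTop atBot :=
    tendsto_id.const_mul_atTop_of_neg (neg_neg_of_pos hε)
  simpa only [mul_zero, Function.comp_apply] using (Real.tendsto_exp_atBot.comp hlin).const_mul M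

section Dichotomy

variable {𝕜 E : Type*} [NontriviallyNormedField 𝕜] [NormedAddCommGroup E] [NormedSpace 𝕜 E]
  {Ps Pb : E →L[𝕜] E} {Gs Gb : ℝ → E → E} {c : ℝ → ℝ}

theorem eq_zero_of_invariant_of_not_tendsto_norm_atTop (hsum : ∀ x, Ps x + Pb x = x)
    (hc : Tendsto c atTop (𝓝 0)) (hGs : ∀ t, 0 ≤ t → ∀ x, ‖Gs t (Ps x)‖ ≤ c t * ‖Ps x‖)
    (hGb : ∀ t, 0 ≤ t → ∀ x, ‖Gb t (Pb x)‖ ≤ c t * ‖Pb x‖) {z : ℝ → E}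
    (hbot : ¬Tendsto (fun r => ‖z r‖) atBot atTop) (htop : ¬Tendsto (fun r => ‖z r‖) atTop atTop)
    {s : ℝ}
    (hz : ∀ t, 0 ≤ t → Ps (z s) = Gs t (Ps (z (s - t))) ∧ Pb (z s) = Gb t (Pb (z (s + t)))) :
    z s = 0 := by
  have hPs : Ps (z s) = 0 := by
    have hlim : Tendsto (fun r => c (s - r)) atBot (𝓝 0) :=
      hc.comp (tendsto_atTop_add_const_left _ s tendsto_neg_atBot_atTop)
    refine eq_zero_of_norm_le_mul_norm_apply Ps hlim hbot ?_
    filter_upwards [eventually_le_atBot s] with r hr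
    have ht : 0 ≤ s - r := sub_nonneg.2 hr
    calc
      ‖Ps (z s)‖ = ‖Gs (s - r) (Ps (z r))‖ := by rw [(hz _ ht).1, sub_sub_cancel]
      _ ≤ c (s - r) * ‖Ps (z r)‖ := hGs _ ht _
  have hPb : Pb (z s) = 0 := by
    have hlim : Tendsto (fun r => c (r - s)) atTop (𝓝 0) :=
      hc.comp (tendsto_atTop_add_const_right _ (-s) tendsto_id)
    refine eq_zero_of_norm_le_mul_norm_apply Pb hlim htop ?_
    filter_upwards [eventually_ge_atTop s] with r hr
    have ht : 0 ≤ r - s := sub_nonneg.2 hr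
    calc
      ‖Pb (z s)‖ = ‖Gb (r - s) (Pb (z r))‖ := by rw [(hz _ ht).2, add_sub_cancel]
      _ ≤ c (r - s) * ‖Pb (z r)‖ := hGb _ ht _
  rw [← hsum (z s), hPs, hPb, add_zero]

theorem stmt8_general (hsum : ∀ x, Ps x + Pb x = x) (hc : Tendsto c atTop (𝓝 0))
    (hGs : ∀ t, 0 ≤ t → ∀ x, ‖Gs t (Ps x)‖ ≤ c t * ‖Ps x‖)
    (hGb : ∀ t, 0 ≤ t → ∀ x, ‖Gb t (Pb x)‖ ≤ c t * ‖Pb x‖) :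
    (∀ z : ℝ → E, (∃ C, ∀ s, ‖z s‖ ≤ C) →
      (∀ s t : ℝ, 0 ≤ t →
        Ps (z s) = Gs t (Ps (z (s - t))) ∧ Pb (z s) = Gb t (Pb (z (s + t)))) →
      ∀ s, z s = 0) ∧
    (∀ p : ENNReal, p ≠ 0 → ∀ z : ℝ → E, MemLp z p volume →
      (∀ᵐ s, ∀ t : ℝ, 0 ≤ t →
        Ps (z s) = Gs t (Ps (z (s - t))) ∧ Pb (z s) = Gb t (Pb (z (s + t)))) →
      ∀ᵐ s, z s = 0) := by
  constructor
  · rintro z ⟨C, hC⟩ hz s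
    have hbdd (l : Filter ℝ) [l.NeBot] : ¬Tendsto (fun r => ‖z r‖) l atTop := fun hl =>
      not_isBoundedUnder_of_tendsto_atTop hl (isBoundedUnder_of ⟨C, hC⟩)
    exact eq_zero_of_invariant_of_not_tendsto_norm_atTop hsum hc hGs hGb (hbdd _) (hbdd _) (hz s)
  · intro p hp z hzp hz
    have hbot := not_tendsto_norm_atTop_of_memLp (fun _ => volume_eq_top_of_mem_atBot) hp hzp
    have htop := not_tendsto_norm_atTop_of_memLp (fun _ => volume_eq_top_of_mem_atTop) hp hzp
    filter_upwards [hz] with s hs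
    exact eq_zero_of_invariant_of_not_tendsto_norm_atTop hsum hc hGs hGb hbot htop hs

end Dichotomy

/-- exponential dichotomy setting.  `H = Hs ⊕ Hb` with complementary
bounded projectors `Ps`, `Pb`; `Gs`, `Gb` are strongly continuous semigroups on `Hs`
resp. `Hb` (encoded as operator families on `H` whose relevant properties are imposed
on `Hs` resp. `Hb`) satisfying `‖G(t)x‖ ≤ M e^{-ε t} ‖x‖` for `t ≥ 0`.
If `z : ℝ → H` satisfies the homogeneous invariance relations
`Ps z(s) = Gs(t) Ps z(s - t)` and `Pb z(s) = Gb(t) Pb z(s + t)` for all `t ≥ 0`, then: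
if `z` is bounded and continuous it vanishes identically; if `z ∈ L²(ℝ; H)` and the
relations hold a.e. in `s`, then `z = 0` almost everywhere. -/
theorem stmt8 {H : Type*} [NormedAddCommGroup H] [InnerProductSpace ℝ H] [CompleteSpace H]
    (Hs Hb : Submodule ℝ H) (hHsC : IsClosed (Hs : Set H)) (hHbC : IsClosed (Hb : Set H))
    (hdisj : Hs ⊓ Hb = ⊥) (hspan : Hs ⊔ Hb = ⊤)
    (Ps Pb : H →L[ℝ] H)
    (hPs_mem : ∀ x, Ps x ∈ Hs) (hPb_mem : ∀ x, Pb x ∈ Hb)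
    (hsum : ∀ x, Ps x + Pb x = x)
    (hPs_id : ∀ x ∈ Hs, Ps x = x) (hPb_id : ∀ x ∈ Hb, Pb x = x)
    (Gs Gb : ℝ → H →L[ℝ] H)
    (hGs0 : ∀ x ∈ Hs, Gs 0 x = x) (hGb0 : ∀ x ∈ Hb, Gb 0 x = x)
    (hGs_mem : ∀ t, 0 ≤ t → ∀ x ∈ Hs, Gs t x ∈ Hs)
    (hGb_mem : ∀ t, 0 ≤ t → ∀ x ∈ Hb, Gb t x ∈ Hb)
    (hGs_sg : ∀ t, 0 ≤ t → ∀ s, 0 ≤ s → ∀ x ∈ Hs, Gs (t + s) x = Gs t (Gs s x))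
    (hGb_sg : ∀ t, 0 ≤ t → ∀ s, 0 ≤ s → ∀ x ∈ Hb, Gb (t + s) x = Gb t (Gb s x))
    (hGs_cont : ∀ x ∈ Hs, ContinuousOn (fun t => Gs t x) (Set.Ici (0 : ℝ)))
    (hGb_cont : ∀ x ∈ Hb, ContinuousOn (fun t => Gb t x) (Set.Ici (0 : ℝ)))
    (M ε : ℝ) (hM : 0 < M) (hε : 0 < ε)
    (hGs_decay : ∀ t, 0 ≤ t → ∀ x ∈ Hs, ‖Gs t x‖ ≤ M * Real.exp (-ε * t) * ‖x‖)
    (hGb_decay : ∀ t, 0 ≤ t → ∀ x ∈ Hb, ‖Gb t x‖ ≤ M * Real.exp (-ε * t) * ‖x‖) :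
    (∀ z : ℝ → H, Continuous z → (∃ C, ∀ s, ‖z s‖ ≤ C) →
      (∀ s : ℝ, ∀ t : ℝ, 0 ≤ t →
        Ps (z s) = Gs t (Ps (z (s - t))) ∧ Pb (z s) = Gb t (Pb (z (s + t)))) →
      ∀ s, z s = 0) ∧
    (∀ z : ℝ → H, MemLp z 2 (volume : Measure ℝ) →
      (∀ᵐ s ∂(volume : Measure ℝ), ∀ t : ℝ, 0 ≤ t →
        Ps (z s) = Gs t (Ps (z (s - t))) ∧ Pb (z s) = Gb t (Pb (z (s + t)))) →
      ∀ᵐ s ∂(volume : Measure ℝ), z s = 0) := by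
  obtain ⟨hbdd, hLp⟩ := stmt8_general (Gs := fun t => Gs t) (Gb := fun t => Gb t) hsum
    (tendsto_mul_exp_neg_mul_atTop M hε) (fun t ht x => hGs_decay t ht _ (hPs_mem x))
    (fun t ht x => hGb_decay t ht _ (hPb_mem x))
  exact ⟨fun z _ => hbdd z, hLp 2 two_ne_zero⟩
end

section
/- In the exponential dichotomy setting, define the kernel F(t, s) ∈ L(H) by F(t, s) := G♯(t − s) Π♯ for t > s and F(t, s) := −G♭(s − t) Π♭ for t < s. Then for every f ∈ L²(ℝ; H) the integral z(t) := ∫_ℝ F(t, s) f(s) ds converges absolutely for every t ∈ ℝ, the function z is bounded and continuous on ℝ, z ∈ L²(ℝ; H), z is a mild dichotomous solution of the inhomogeneous equation with inhomogeneity f, and the estimates ‖Π♯ z‖_{L²(ℝ;H)} ≤ (M/ε) ‖Π♯ f‖_{L²(ℝ;H)} and ‖Π♭ z‖_{L²(ℝ;H)} ≤ (M/ε) ‖Π♭ f‖_{L²(ℝ;H)} hold. -/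
open MeasureTheory

/-!
The kernel splits `z` into a forward Duhamel integral over the stable past and a backward one over
the unstable future; the backward integral is the forward one after time reversal. The forward
integrand is dominated by `K(t - s) ‖Π f(s)‖` with `K(r) = M e^{-εr}` on `[0, ∞)`. Hence Hölder's
inequality gives absolute convergence and boundedness, dominated convergence gives continuity,
and Young's inequality with `‖K‖₁ = M / ε` gives the `Lᵖ` estimate. The mild equations come from
splitting the domain of integration and applying the semigroup law under the integral sign.
-/

open Set Filter Topology
open scoped ENNReal NNReal

theorem lintegral_mul_rpow_le {α : Type*} [MeasurableSpace α] {μ : Measure α} {k h : α → ℝ≥0∞}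
    {p : ℝ} (hp : 1 ≤ p) (hk : AEMeasurable k μ) (hh : AEMeasurable h μ) :
    (∫⁻ a, k a * h a ∂μ) ^ p ≤ (∫⁻ a, k a ∂μ) ^ (p - 1) * ∫⁻ a, k a * h a ^ p ∂μ := by
  have hp0 : 0 < p := by linarith
  have hp1 : 0 ≤ 1 - p⁻¹ := sub_nonneg.2 (inv_le_one_of_one_le₀ hp)
  have hsplit (a : α) : k a ^ (1 - p⁻¹) * (k a * h a ^ p) ^ p⁻¹ = k a * h a := by
    rw [ENNReal.mul_rpow_of_nonneg _ _ (by positivity), ENNReal.rpow_rpow_inv hp0.ne', ← mul_assoc,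
      ← ENNReal.rpow_add_of_nonneg _ _ hp1 (by positivity), sub_add_cancel, ENNReal.rpow_one]
  have holder := ENNReal.lintegral_mul_norm_pow_le hk (hk.mul (hh.pow_const p)) hp1
    (inv_nonneg.2 hp0.le) (sub_add_cancel 1 p⁻¹)
  simp only [Pi.mul_apply, hsplit] at holder
  calc (∫⁻ a, k a * h a ∂μ) ^ p
      ≤ ((∫⁻ a, k a ∂μ) ^ (1 - p⁻¹) * (∫⁻ a, k a * h a ^ p ∂μ) ^ p⁻¹) ^ p := by gcongr
    _ = (∫⁻ a, k a ∂μ) ^ (p - 1) * ∫⁻ a, k a * h a ^ p ∂μ := by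
      rw [ENNReal.mul_rpow_of_nonneg _ _ hp0.le, ENNReal.rpow_inv_rpow hp0.ne',
        ← ENNReal.rpow_mul, sub_mul, one_mul, inv_mul_cancel₀ hp0.ne']

section Young

variable {G : Type*} [MeasurableSpace G] [AddGroup G] [MeasurableAdd₂ G] [MeasurableNeg G]
  {μ : Measure G} [SFinite μ] [μ.IsAddLeftInvariant] {k φ : G → ℝ≥0∞}

theorem lintegral_lconvolution (hk : AEMeasurable k μ) (hφ : AEMeasurable φ μ) :
    ∫⁻ x, (k ⋆ₗ[μ] φ) x ∂μ = (∫⁻ y, k y ∂μ) * ∫⁻ x, φ x ∂μ := by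
  simp only [lconvolution_def]
  rw [lintegral_lintegral_swap (by fun_prop)]
  calc ∫⁻ y, ∫⁻ x, k y * φ (-y + x) ∂μ ∂μ
      = ∫⁻ y, k y * ∫⁻ x, φ x ∂μ ∂μ := by
        refine lintegral_congr fun y => ?_
        have hφ_add : AEMeasurable (fun x => φ (-y + x)) μ :=
          hφ.comp_quasiMeasurePreserving
            (measurePreserving_add_left μ (-y)).quasiMeasurePreserving
        rw [lintegral_const_mul'' _ hφ_add, lintegral_add_left_eq_self φ (-y)]
    _ = (∫⁻ y, k y ∂μ) * ∫⁻ x, φ x ∂μ := lintegral_mul_const'' _ hk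

theorem quasiMeasurePreserving_neg_add_right (x : G) :
    Measure.QuasiMeasurePreserving (fun y => -y + x) μ μ := by
  simpa [Function.comp_def] using (quasiMeasurePreserving_neg μ).comp
    (measurePreserving_add_left μ (-x)).quasiMeasurePreserving

theorem lconvolution_le_lintegral_mul_eLpNormEssSup (hk : AEMeasurable k μ) (x : G) :
    (k ⋆ₗ[μ] φ) x ≤ (∫⁻ y, k y ∂μ) * eLpNormEssSup φ μ := by
  have hφ_le : ∀ᵐ y ∂μ, φ (-y + x) ≤ eLpNormEssSup φ μ :=
    (quasiMeasurePreserving_neg_add_right x).ae (enorm_ae_le_eLpNormEssSup φ μ)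
  rw [lconvolution_def, ← lintegral_mul_const'' _ hk]
  exact lintegral_mono_ae (hφ_le.mono fun y hy => by gcongr)

theorem lintegral_lconvolution_rpow_le {p : ℝ} (hp : 1 ≤ p) (hk : AEMeasurable k μ)
    (hφ : AEMeasurable φ μ) :
    ∫⁻ x, (k ⋆ₗ[μ] φ) x ^ p ∂μ ≤ (∫⁻ y, k y ∂μ) ^ p * ∫⁻ x, φ x ^ p ∂μ :=
  calc ∫⁻ x, (k ⋆ₗ[μ] φ) x ^ p ∂μ
      ≤ ∫⁻ x, (∫⁻ y, k y ∂μ) ^ (p - 1) * (k ⋆ₗ[μ] fun y => φ y ^ p) x ∂μ :=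
        lintegral_mono fun x => lintegral_mul_rpow_le hp hk
          (hφ.comp_quasiMeasurePreserving (quasiMeasurePreserving_neg_add_right x))
    _ = (∫⁻ y, k y ∂μ) ^ (p - 1) * ((∫⁻ y, k y ∂μ) * ∫⁻ x, φ x ^ p ∂μ) := by
        rw [lintegral_const_mul'' _ (by fun_prop), lintegral_lconvolution hk (hφ.pow_const p)]
    _ = (∫⁻ y, k y ∂μ) ^ p * ∫⁻ x, φ x ^ p ∂μ := by
        nth_rw 2 [← ENNReal.rpow_one (∫⁻ y, k y ∂μ)]
        rw [← mul_assoc, ← ENNReal.rpow_add_of_nonneg _ _ (sub_nonneg.2 hp) zero_le_one,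
          sub_add_cancel]

theorem eLpNorm_lconvolution_le {p : ℝ≥0∞} (hp : 1 ≤ p) (hk : AEMeasurable k μ)
    (hφ : AEMeasurable φ μ) :
    eLpNorm (k ⋆ₗ[μ] φ) p μ ≤ (∫⁻ y, k y ∂μ) * eLpNorm φ p μ := by
  rcases eq_or_ne p ∞ with rfl | hp_top
  · simpa only [eLpNorm_exponent_top, enorm_eq_self] using
      eLpNormEssSup_le_of_ae_enorm_bound
        (.of_forall (lconvolution_le_lintegral_mul_eLpNormEssSup hk))
  · have hp1 : 1 ≤ p.toReal := by simpa using ENNReal.toReal_mono hp_top hp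
    have hp0 : 0 < p.toReal := by linarith
    simp only [eLpNorm_eq_lintegral_rpow_enorm_toReal (one_pos.trans_le hp).ne' hp_top,
      enorm_eq_self, one_div]
    rw [ENNReal.rpow_inv_le_iff hp0, ENNReal.mul_rpow_of_nonneg _ _ hp0.le,
      ENNReal.rpow_inv_rpow hp0.ne']
    exact lintegral_lconvolution_rpow_le hp1 hk hφ

end Young

section Reflection

variable {G F : Type*} [MeasurableSpace G] [Neg G] [MeasurableNeg G] {μ : Measure G}
  [μ.IsNegInvariant] [NormedAddCommGroup F] {p : ℝ≥0∞} {g : G → F}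

theorem memLp_comp_neg (hg : MemLp g p μ) : MemLp (fun x => g (-x)) p μ :=
  hg.comp_measurePreserving (Measure.measurePreserving_neg μ)

theorem eLpNorm_comp_neg (hg : AEStronglyMeasurable g μ) :
    eLpNorm (fun x => g (-x)) p μ = eLpNorm g p μ :=
  eLpNorm_comp_measurePreserving hg (Measure.measurePreserving_neg μ)

end Reflection

section ExpKernel

/-- The convolution kernel `r ↦ M e^{-εr}` on `[0, ∞)`, extended by zero to `ℝ`, which
dominates the Duhamel integrand of a semigroup with decay `M e^{-εt}`. -/
noncomputable def expKernel (M ε r : ℝ) : ℝ :=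
  (Ici 0).indicator (fun r => M * Real.exp (-ε * r)) r

variable {M ε : ℝ}

theorem expKernel_of_nonneg {r : ℝ} (hr : 0 ≤ r) : expKernel M ε r = M * Real.exp (-ε * r) :=
  indicator_of_mem (mem_Ici.2 hr) _

theorem expKernel_nonneg (hM : 0 ≤ M) (r : ℝ) : 0 ≤ expKernel M ε r :=
  indicator_nonneg (fun _ _ => by positivity) r

theorem measurable_expKernel : Measurable (expKernel M ε) :=
  Measurable.indicator (by fun_prop) measurableSet_Ici

theorem expKernel_le_exp_mul {r r' : ℝ} (hM : 0 ≤ M) (hr : r ≤ r') :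
    expKernel M ε r ≤ Real.exp (ε * (r' - r)) * expKernel M ε r' := by
  rcases lt_or_ge r 0 with hneg | hr0
  · rw [expKernel, indicator_of_notMem (notMem_Ici.2 hneg)]
    exact mul_nonneg (Real.exp_pos _).le (expKernel_nonneg hM r')
  · rw [expKernel_of_nonneg hr0, expKernel_of_nonneg (hr0.trans hr), mul_left_comm, ← Real.exp_add]
    exact (congrArg (fun a => M * Real.exp a) (by ring)).le

theorem integrable_expKernel (hε : 0 < ε) : Integrable (expKernel M ε) := by
  refine IntegrableOn.integrable_indicator (Integrable.const_mul ?_ M) measurableSet_Ici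
  exact (integrableOn_Ici_iff_integrableOn_Ioi).2 (integrableOn_exp_mul_Ioi (neg_lt_zero.2 hε) 0)

theorem integral_expKernel (hε : 0 < ε) : ∫ r, expKernel M ε r = M / ε := by
  simp only [expKernel]
  rw [integral_indicator measurableSet_Ici, integral_Ici_eq_integral_Ioi, integral_const_mul,
    integral_exp_mul_Ioi (neg_lt_zero.2 hε)]
  simp [div_eq_mul_inv]

theorem lintegral_enorm_expKernel (hM : 0 ≤ M) (hε : 0 < ε) :
    ∫⁻ r, ‖expKernel M ε r‖ₑ = ENNReal.ofReal (M / ε) := by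
  rw [← integral_expKernel hε, ofReal_integral_eq_lintegral_ofReal (integrable_expKernel hε)
    (.of_forall (expKernel_nonneg hM))]
  exact lintegral_congr fun r => Real.enorm_of_nonneg (expKernel_nonneg hM r)

theorem expKernel_rpow (hM : 0 ≤ M) {q : ℝ} (hq : q ≠ 0) (r : ℝ) :
    expKernel M ε r ^ q = expKernel (M ^ q) (q * ε) r := by
  rcases lt_or_ge r 0 with hneg | hr
  · simp [expKernel, notMem_Ici.2 hneg, hq]
  · rw [expKernel_of_nonneg hr, expKernel_of_nonneg hr, Real.mul_rpow hM (Real.exp_pos _).le,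
      ← Real.exp_mul]
    ring_nf

theorem memLp_expKernel (hM : 0 ≤ M) (hε : 0 < ε) (q : ℝ≥0∞) : MemLp (expKernel M ε) q := by
  have hmeas : AEStronglyMeasurable (expKernel M ε) :=
    measurable_expKernel.aestronglyMeasurable
  rcases eq_or_ne q 0 with rfl | hq_zero
  · exact memLp_zero_iff_aestronglyMeasurable.2 hmeas
  rcases eq_or_ne q ∞ with rfl | hq_top
  · refine memLp_top_of_bound hmeas M (.of_forall fun r => ?_)
    rw [Real.norm_of_nonneg (expKernel_nonneg hM r)]
    exact indicator_apply_le' (fun hr => mul_le_of_le_one_right hM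
      (Real.exp_le_one_iff.2 (by nlinarith [mem_Ici.1 hr]))) fun _ => hM
  · have hq : 0 < q.toReal := ENNReal.toReal_pos hq_zero hq_top
    refine (integrable_norm_rpow_iff hmeas hq_zero hq_top).1 ?_
    simp only [Real.norm_of_nonneg (expKernel_nonneg hM _), expKernel_rpow hM hq.ne']
    exact integrable_expKernel (mul_pos hq hε)

end ExpKernel

section Dichotomy

variable {E : Type*} [NormedAddCommGroup E] [NormedSpace ℝ E]

/-- A strongly continuous, exponentially decaying semigroup of bounded operators which may be
degenerate: `T 0` is only an idempotent. Such a `T` encodes a semigroup on the closed subspace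
`range (T 0)`, precomposed with the projection `T 0`, so that both halves of a dichotomy act on the
same space. -/
structure IsExpDecaySemigroup (T : ℝ≥0 → E →L[ℝ] E) (M ε : ℝ) : Prop where
  bound_nonneg : 0 ≤ M
  rate_pos : 0 < ε
  add_apply : ∀ s t x, T (s + t) x = T s (T t x)
  continuous_apply : ∀ x, Continuous fun t => T t x
  norm_apply_le : ∀ t x, ‖T t x‖ ≤ M * Real.exp (-ε * t) * ‖T 0 x‖

/-- The forward Duhamel (variation of constants) integral `∫_{-∞}^t T(t - s) f(s) ds`. Here
`Real.toNNReal` only changes the type of `t - s ≥ 0`. -/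
noncomputable def duhamel (T : ℝ≥0 → E →L[ℝ] E) (f : ℝ → E) (t : ℝ) : E :=
  ∫ s in Iic t, T (t - s).toNNReal (f s)

/-- The backward Duhamel integral `∫_t^∞ T(s - t) f(s) ds`. -/
noncomputable def backwardDuhamel (T : ℝ≥0 → E →L[ℝ] E) (f : ℝ → E) (t : ℝ) : E :=
  ∫ s in Ici t, T (s - t).toNNReal (f s)

theorem duhamel_eq_integral_indicator (T : ℝ≥0 → E →L[ℝ] E) (f : ℝ → E) (t : ℝ) :
    duhamel T f t = ∫ s, (Iic t).indicator (fun s => T (t - s).toNNReal (f s)) s :=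
  (integral_indicator measurableSet_Iic).symm

theorem backwardDuhamel_eq_duhamel_neg (T : ℝ≥0 → E →L[ℝ] E) (f : ℝ → E) :
    backwardDuhamel T f = fun t => duhamel T (fun s => f (-s)) (-t) := by
  ext t
  have h := integral_comp_neg_Iic (-t) fun s => T (s - t).toNNReal (f s)
  rw [neg_neg] at h
  rw [backwardDuhamel, integral_Ici_eq_integral_Ioi, ← h, duhamel]
  simp only [neg_sub_left, add_comm]

namespace IsExpDecaySemigroup

variable {T : ℝ≥0 → E →L[ℝ] E} {M ε : ℝ} {p : ℝ≥0∞} {f : ℝ → E}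

theorem zero_apply_apply (hT : IsExpDecaySemigroup T M ε) (t : ℝ≥0) (x : E) :
    T 0 (T t x) = T t x := by
  rw [← hT.add_apply, zero_add]

theorem apply_zero_apply (hT : IsExpDecaySemigroup T M ε) (t : ℝ≥0) (x : E) :
    T t (T 0 x) = T t x := by
  rw [← hT.add_apply, add_zero]

theorem continuous_uncurry (hT : IsExpDecaySemigroup T M ε) :
    Continuous fun a : ℝ≥0 × E => T a.1 a.2 := by
  have hM := hT.bound_nonneg
  refine continuous_prod_of_continuous_lipschitzWith' _ (M.toNNReal * ‖T 0‖₊) (fun t => ?_)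
    hT.continuous_apply
  refine (T t).lipschitzWith_of_opNorm_le <| (T t).opNorm_le_bound (by positivity) fun x => ?_
  rw [NNReal.coe_mul, Real.coe_toNNReal M hM, coe_nnnorm, mul_assoc]
  calc ‖T t x‖ ≤ M * Real.exp (-ε * t) * ‖T 0 x‖ := hT.norm_apply_le t x
    _ ≤ M * 1 * (‖T 0‖ * ‖x‖) := by
      gcongr
      · exact Real.exp_le_one_iff.2 (by nlinarith [hT.rate_pos, t.coe_nonneg])
      · exact (T 0).le_opNorm x
    _ = M * (‖T 0‖ * ‖x‖) := by rw [mul_one]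

theorem norm_indicator_le (hT : IsExpDecaySemigroup T M ε) (f : ℝ → E) (t s : ℝ) :
    ‖(Iic t).indicator (fun s => T (t - s).toNNReal (f s)) s‖ ≤
      expKernel M ε (t - s) * ‖T 0 (f s)‖ := by
  refine (norm_indicator_eq_indicator_norm _ s).trans_le (indicator_apply_le' (fun hs => ?_)
    fun _ => mul_nonneg (expKernel_nonneg hT.bound_nonneg _) (norm_nonneg _))
  have hts : 0 ≤ t - s := sub_nonneg.2 hs
  simpa only [expKernel_of_nonneg hts, Real.coe_toNNReal _ hts] using
    hT.norm_apply_le (t - s).toNNReal (f s)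

theorem aestronglyMeasurable_indicator (hT : IsExpDecaySemigroup T M ε)
    (hf : AEStronglyMeasurable f) (t : ℝ) :
    AEStronglyMeasurable ((Iic t).indicator fun s => T (t - s).toNNReal (f s)) := by
  have htime : Continuous fun s : ℝ => (t - s).toNNReal := by fun_prop
  exact (hT.continuous_uncurry.comp_aestronglyMeasurable
    (htime.aestronglyMeasurable.prodMk hf)).indicator measurableSet_Iic

theorem integrable_expKernel_mul_norm (hT : IsExpDecaySemigroup T M ε) (hp : 1 ≤ p)
    (hf : MemLp f p) (t : ℝ) : Integrable fun s => expKernel M ε (t - s) * ‖T 0 (f s)‖ := by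
  have : p.HolderConjugate p.conjExponent := .conjExponent hp
  have hK : MemLp (fun s => expKernel M ε (t - s)) p.conjExponent :=
    (memLp_expKernel hT.bound_nonneg hT.rate_pos _).comp_measurePreserving
      (Measure.measurePreserving_sub_left volume t)
  exact memLp_one_iff_integrable.1 (((T 0).comp_memLp' hf).norm.mul hK)

theorem integrable_indicator (hT : IsExpDecaySemigroup T M ε) (hp : 1 ≤ p) (hf : MemLp f p)
    (t : ℝ) : Integrable ((Iic t).indicator fun s => T (t - s).toNNReal (f s)) :=
  (hT.integrable_expKernel_mul_norm hp hf t).mono' (hT.aestronglyMeasurable_indicator hf.1 t)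
    (.of_forall (hT.norm_indicator_le f t))

theorem integrableOn_Iic (hT : IsExpDecaySemigroup T M ε) (hp : 1 ≤ p) (hf : MemLp f p) (t : ℝ) :
    IntegrableOn (fun s => T (t - s).toNNReal (f s)) (Iic t) :=
  (integrable_indicator_iff measurableSet_Iic).1 (hT.integrable_indicator hp hf t)

theorem enorm_duhamel_le_lintegral (hT : IsExpDecaySemigroup T M ε) (f : ℝ → E) (t : ℝ) :
    ‖duhamel T f t‖ₑ ≤ ∫⁻ s, ‖expKernel M ε (t - s) • T 0 (f s)‖ₑ := by
  rw [duhamel_eq_integral_indicator]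
  refine (enorm_integral_le_lintegral_enorm _).trans
    (lintegral_mono fun s => enorm_le_iff_norm_le.2 ?_)
  rw [norm_smul, Real.norm_of_nonneg (expKernel_nonneg hT.bound_nonneg _)]
  exact hT.norm_indicator_le f t s

theorem enorm_duhamel_le_lconvolution (hT : IsExpDecaySemigroup T M ε) (f : ℝ → E) (t : ℝ) :
    ‖duhamel T f t‖ₑ ≤ ((fun r => ‖expKernel M ε r‖ₑ) ⋆ₗ fun s => ‖T 0 (f s)‖ₑ) t := by
  rw [lconvolution_comm, lconvolution_def]
  simpa only [neg_add_eq_sub, mul_comm, enorm_smul] using hT.enorm_duhamel_le_lintegral f t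

theorem eLpNorm_duhamel_le (hT : IsExpDecaySemigroup T M ε) (hp : 1 ≤ p) (hf : MemLp f p) :
    eLpNorm (duhamel T f) p ≤ ENNReal.ofReal (M / ε) * eLpNorm (fun s => T 0 (f s)) p := by
  rw [← lintegral_enorm_expKernel hT.bound_nonneg hT.rate_pos,
    ← eLpNorm_enorm (fun s => T 0 (f s))]
  exact (eLpNorm_mono_enorm (hT.enorm_duhamel_le_lconvolution f)).trans
    (eLpNorm_lconvolution_le hp measurable_expKernel.enorm.aemeasurable
      ((T 0).comp_memLp' hf).1.enorm)

theorem enorm_duhamel_le_mul_eLpNorm (hT : IsExpDecaySemigroup T M ε) (hp : 1 ≤ p) (hf : MemLp f p)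
    (t : ℝ) : ‖duhamel T f t‖ₑ ≤
      eLpNorm (expKernel M ε) p.conjExponent * eLpNorm (fun s => T 0 (f s)) p := by
  have : p.conjExponent.HolderConjugate p := (ENNReal.HolderConjugate.conjExponent hp).symm
  have hK := (memLp_expKernel hT.bound_nonneg hT.rate_pos p.conjExponent).1
  have hsub : MeasurePreserving (fun s : ℝ => t - s) := Measure.measurePreserving_sub_left volume t
  have holder := eLpNorm_smul_le_mul_eLpNorm (p := p.conjExponent) (q := p) (r := 1)
    ((T 0).comp_memLp' hf).1 (hK.comp_measurePreserving hsub)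
  rw [eLpNorm_comp_measurePreserving hK hsub, eLpNorm_one_eq_lintegral_enorm] at holder
  exact (hT.enorm_duhamel_le_lintegral f t).trans holder

theorem exists_norm_duhamel_le (hT : IsExpDecaySemigroup T M ε) (hp : 1 ≤ p) (hf : MemLp f p) :
    ∃ C, ∀ t, ‖duhamel T f t‖ ≤ C := by
  have hfinite : eLpNorm (expKernel M ε) p.conjExponent * eLpNorm (fun s => T 0 (f s)) p ≠ ∞ :=
    ENNReal.mul_ne_top (memLp_expKernel hT.bound_nonneg hT.rate_pos _).2.ne
      ((T 0).comp_memLp' hf).2.ne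
  exact ⟨_, fun t => toReal_enorm (duhamel T f t) ▸
    ENNReal.toReal_mono hfinite (hT.enorm_duhamel_le_mul_eLpNorm hp hf t)⟩

theorem continuousAt_indicator (hT : IsExpDecaySemigroup T M ε) (x : E) {s t₀ : ℝ} (hs : s ≠ t₀) :
    ContinuousAt (fun t => (Iic t).indicator (fun s => T (t - s).toNNReal x) s) t₀ := by
  rcases hs.lt_or_gt with hlt | hgt
  · have hcont : Continuous fun t : ℝ => T (t - s).toNNReal x :=
      (hT.continuous_apply x).comp (by fun_prop)
    refine hcont.continuousAt.congr ?_
    filter_upwards [eventually_gt_nhds hlt] with t ht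
    exact (indicator_of_mem (mem_Iic.2 ht.le) fun s => T (t - s).toNNReal x).symm
  · refine ContinuousAt.congr (f := fun _ => (0 : E)) continuousAt_const ?_
    filter_upwards [eventually_lt_nhds hgt] with t ht
    exact (indicator_of_notMem (notMem_Iic.2 ht) fun s => T (t - s).toNNReal x).symm

theorem continuous_duhamel (hT : IsExpDecaySemigroup T M ε) (hp : 1 ≤ p) (hf : MemLp f p) :
    Continuous (duhamel T f) := by
  rw [funext (duhamel_eq_integral_indicator T f)]
  refine continuous_iff_continuousAt.2 fun t₀ => ?_
  -- Near `t₀` the kernels `K(t - s)` have the common majorant `e^{2ε} K(t₀ + 1 - s)`.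
  refine continuousAt_of_dominated
    (bound := fun s => Real.exp (ε * 2) * (expKernel M ε (t₀ + 1 - s) * ‖T 0 (f s)‖))
    (.of_forall (hT.aestronglyMeasurable_indicator hf.1)) ?_
    ((hT.integrable_expKernel_mul_norm hp hf (t₀ + 1)).const_mul _) ?_
  · filter_upwards [Ioo_mem_nhds (sub_one_lt t₀) (lt_add_one t₀)] with t ⟨ht₁, ht₂⟩
    refine .of_forall fun s => (hT.norm_indicator_le f t s).trans ?_
    have hε := hT.rate_pos
    rw [← mul_assoc]
    gcongr
    refine (expKernel_le_exp_mul hT.bound_nonneg (r' := t₀ + 1 - s) (by linarith)).trans ?_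
    gcongr
    · exact expKernel_nonneg hT.bound_nonneg _
    · linarith
  · filter_upwards [Measure.ae_ne volume t₀] with s hs
    exact hT.continuousAt_indicator (f s) hs

theorem memLp_duhamel (hT : IsExpDecaySemigroup T M ε) (hp : 1 ≤ p) (hf : MemLp f p) :
    MemLp (duhamel T f) p :=
  ⟨(hT.continuous_duhamel hp hf).aestronglyMeasurable, (hT.eLpNorm_duhamel_le hp hf).trans_lt
    (ENNReal.mul_lt_top ENNReal.ofReal_lt_top ((T 0).comp_memLp' hf).2)⟩

theorem integrableOn_Ici (hT : IsExpDecaySemigroup T M ε) (hp : 1 ≤ p) (hf : MemLp f p) (t : ℝ) :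
    IntegrableOn (fun s => T (s - t).toNNReal (f s)) (Ici t) := by
  refine ((Measure.measurePreserving_neg volume).integrableOn_comp_preimage
    (Homeomorph.neg ℝ).measurableEmbedding).1 ?_
  simpa only [Function.comp_def, neg_preimage, neg_Ici, neg_sub_comm] using
    hT.integrableOn_Iic hp (memLp_comp_neg hf) (-t)

theorem continuous_backwardDuhamel (hT : IsExpDecaySemigroup T M ε) (hp : 1 ≤ p) (hf : MemLp f p) :
    Continuous (backwardDuhamel T f) := by
  rw [backwardDuhamel_eq_duhamel_neg]
  exact (hT.continuous_duhamel hp (memLp_comp_neg hf)).comp continuous_neg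

theorem exists_norm_backwardDuhamel_le (hT : IsExpDecaySemigroup T M ε) (hp : 1 ≤ p)
    (hf : MemLp f p) : ∃ C, ∀ t, ‖backwardDuhamel T f t‖ ≤ C := by
  obtain ⟨C, hC⟩ := hT.exists_norm_duhamel_le hp (memLp_comp_neg hf)
  exact ⟨C, fun t => by simpa only [backwardDuhamel_eq_duhamel_neg] using hC (-t)⟩

theorem memLp_backwardDuhamel (hT : IsExpDecaySemigroup T M ε) (hp : 1 ≤ p) (hf : MemLp f p) :
    MemLp (backwardDuhamel T f) p := by
  rw [backwardDuhamel_eq_duhamel_neg]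
  exact memLp_comp_neg (hT.memLp_duhamel hp (memLp_comp_neg hf))

theorem eLpNorm_backwardDuhamel_le (hT : IsExpDecaySemigroup T M ε) (hp : 1 ≤ p)
    (hf : MemLp f p) :
    eLpNorm (backwardDuhamel T f) p ≤
      ENNReal.ofReal (M / ε) * eLpNorm (fun s => T 0 (f s)) p := by
  have hf_neg := memLp_comp_neg hf
  have hT_f : AEStronglyMeasurable fun s => T 0 (f s) := ((T 0).comp_memLp' hf).1
  rw [backwardDuhamel_eq_duhamel_neg, eLpNorm_comp_neg (hT.memLp_duhamel hp hf_neg).1,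
    ← eLpNorm_comp_neg hT_f]
  exact hT.eLpNorm_duhamel_le hp hf_neg

section Complete

variable [CompleteSpace E]

theorem apply_duhamel (hT : IsExpDecaySemigroup T M ε) (hp : 1 ≤ p) (hf : MemLp f p) (r : ℝ≥0)
    (t : ℝ) : T r (duhamel T f t) = ∫ s in Iic t, T (r + (t - s).toNNReal) (f s) := by
  simp only [duhamel, hT.add_apply]
  exact ((T r).integral_comp_comm (hT.integrableOn_Iic hp hf t)).symm

theorem zero_apply_duhamel (hT : IsExpDecaySemigroup T M ε) (hp : 1 ≤ p) (hf : MemLp f p) (t : ℝ) :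
    T 0 (duhamel T f t) = duhamel T f t := by
  rw [hT.apply_duhamel hp hf]
  simp only [zero_add, duhamel]

theorem duhamel_eq_add (hT : IsExpDecaySemigroup T M ε) (hp : 1 ≤ p) (hf : MemLp f p) (s : ℝ)
    (t : ℝ≥0) : duhamel T f s =
      T t (duhamel T f (s - t)) + ∫ θ in (s - t)..s, T (s - θ).toNNReal (f θ) := by
  have hle : s - t ≤ s := sub_le_self s t.2
  have hpast : T t (duhamel T f (s - t)) = ∫ θ in Iic (s - t), T (s - θ).toNNReal (f θ) := by
    rw [hT.apply_duhamel hp hf]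
    refine setIntegral_congr_fun measurableSet_Iic fun θ hθ => ?_
    have htime : t + (s - t - θ).toNNReal = (s - θ).toNNReal := NNReal.eq <| by
      have hθs : θ ≤ s := (mem_Iic.1 hθ).trans hle
      rw [NNReal.coe_add, Real.coe_toNNReal _ (sub_nonneg.2 hθ),
        Real.coe_toNNReal _ (sub_nonneg.2 hθs)]
      ring
    simp only [htime]
  have hint := hT.integrableOn_Iic hp hf s
  rw [hpast, ← intervalIntegral.integral_Iic_sub_Iic (hint.mono_set (Iic_subset_Iic.2 hle)) hint,
    add_sub_cancel, duhamel]

theorem zero_apply_backwardDuhamel (hT : IsExpDecaySemigroup T M ε) (hp : 1 ≤ p) (hf : MemLp f p)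
    (t : ℝ) : T 0 (backwardDuhamel T f t) = backwardDuhamel T f t := by
  simp only [backwardDuhamel_eq_duhamel_neg]
  exact hT.zero_apply_duhamel hp (memLp_comp_neg hf) (-t)

theorem backwardDuhamel_eq_add (hT : IsExpDecaySemigroup T M ε) (hp : 1 ≤ p) (hf : MemLp f p)
    (s : ℝ) (t : ℝ≥0) : backwardDuhamel T f s =
      T t (backwardDuhamel T f (s + t)) + ∫ θ in s..(s + t), T (θ - s).toNNReal (f θ) := by
  have hreflect : ∫ θ in (-s - t)..(-s), T (-s - θ).toNNReal (f (-θ)) =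
      ∫ θ in s..(s + t), T (θ - s).toNNReal (f θ) := by
    have h := intervalIntegral.integral_comp_neg (a := -s - t) (b := -s) fun θ =>
      T (θ - s).toNNReal (f θ)
    simpa only [neg_sub_comm, neg_neg, neg_sub, sub_neg_eq_add, add_comm] using h
  simp only [backwardDuhamel_eq_duhamel_neg, ← hreflect, neg_add']
  exact hT.duhamel_eq_add hp (memLp_comp_neg hf) (-s) t

end Complete

end IsExpDecaySemigroup

/-- An exponential dichotomy, encoded by two degenerate semigroups: `S`, which acts forwards on the
stable subspace `range (S 0)`, and `U`, which acts backwards on the unstable subspace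
`range (U 0)`. The idempotents `S 0` and `U 0` are the complementary spectral projections. -/
structure IsExpDichotomy (S U : ℝ≥0 → E →L[ℝ] E) (M ε : ℝ) : Prop where
  stable : IsExpDecaySemigroup S M ε
  unstable : IsExpDecaySemigroup U M ε
  zero_apply_add_zero_apply : ∀ x, S 0 x + U 0 x = x

/-- The Green kernel `F(t, s)` of a dichotomy. On the diagonal, where the two one-sided limits
disagree, it takes the value `-U 0`. -/
noncomputable def greenKernel (S U : ℝ≥0 → E →L[ℝ] E) (t s : ℝ) : E →L[ℝ] E :=
  if s < t then S (t - s).toNNReal else -U (s - t).toNNReal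

/-- The Green integral `∫ F(t, s) f(s) ds`, the dichotomous solution with inhomogeneity `f`. -/
noncomputable def greenIntegral (S U : ℝ≥0 → E →L[ℝ] E) (f : ℝ → E) (t : ℝ) : E :=
  ∫ s, greenKernel S U t s (f s)

theorem greenKernel_apply_eq_piecewise (S U : ℝ≥0 → E →L[ℝ] E) (f : ℝ → E) (t : ℝ) :
    (fun s => greenKernel S U t s (f s)) = (Iio t).piecewise
      (fun s => S (t - s).toNNReal (f s)) (-fun s => U (s - t).toNNReal (f s)) := by
  ext s
  by_cases hs : s < t <;> simp [greenKernel, hs]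

namespace IsExpDichotomy

variable {S U : ℝ≥0 → E →L[ℝ] E} {M ε : ℝ} {p : ℝ≥0∞} {f : ℝ → E}

theorem stable_zero_apply_unstable (h : IsExpDichotomy S U M ε) (t : ℝ≥0) (x : E) :
    S 0 (U t x) = 0 := by
  simpa only [h.unstable.zero_apply_apply, add_eq_right] using h.zero_apply_add_zero_apply (U t x)

theorem unstable_zero_apply_stable (h : IsExpDichotomy S U M ε) (t : ℝ≥0) (x : E) :
    U 0 (S t x) = 0 := by
  simpa only [h.stable.zero_apply_apply, add_eq_left] using h.zero_apply_add_zero_apply (S t x)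

theorem integrable_greenKernel_apply (h : IsExpDichotomy S U M ε) (hp : 1 ≤ p) (hf : MemLp f p)
    (t : ℝ) : Integrable fun s => greenKernel S U t s (f s) := by
  rw [greenKernel_apply_eq_piecewise]
  refine Integrable.piecewise measurableSet_Iio
    ((h.stable.integrableOn_Iic hp hf t).mono_set Iio_subset_Iic_self) ?_
  rw [compl_Iio]
  exact (h.unstable.integrableOn_Ici hp hf t).neg

theorem greenIntegral_eq_sub (h : IsExpDichotomy S U M ε) (hp : 1 ≤ p) (hf : MemLp f p) :
    greenIntegral S U f = duhamel S f - backwardDuhamel U f := by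
  ext t
  have hS := h.stable.integrableOn_Iic hp hf t
  have hU := h.unstable.integrableOn_Ici hp hf t
  rw [← compl_Iio] at hU
  rw [greenIntegral, greenKernel_apply_eq_piecewise, integral_piecewise measurableSet_Iio
    (hS.mono_set Iio_subset_Iic_self) hU.neg, compl_Iio, integral_neg', Pi.sub_apply, duhamel,
    integral_Iic_eq_integral_Iio, backwardDuhamel, sub_eq_add_neg]

theorem continuous_greenIntegral (h : IsExpDichotomy S U M ε) (hp : 1 ≤ p) (hf : MemLp f p) :
    Continuous (greenIntegral S U f) := by
  rw [h.greenIntegral_eq_sub hp hf]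
  exact (h.stable.continuous_duhamel hp hf).sub (h.unstable.continuous_backwardDuhamel hp hf)

theorem exists_norm_greenIntegral_le (h : IsExpDichotomy S U M ε) (hp : 1 ≤ p) (hf : MemLp f p) :
    ∃ C, ∀ t, ‖greenIntegral S U f t‖ ≤ C := by
  obtain ⟨C, hC⟩ := h.stable.exists_norm_duhamel_le hp hf
  obtain ⟨D, hD⟩ := h.unstable.exists_norm_backwardDuhamel_le hp hf
  rw [h.greenIntegral_eq_sub hp hf]
  exact ⟨C + D, fun t => norm_sub_le_of_le (hC t) (hD t)⟩

theorem memLp_greenIntegral (h : IsExpDichotomy S U M ε) (hp : 1 ≤ p) (hf : MemLp f p) :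
    MemLp (greenIntegral S U f) p := by
  rw [h.greenIntegral_eq_sub hp hf]
  exact (h.stable.memLp_duhamel hp hf).sub (h.unstable.memLp_backwardDuhamel hp hf)

variable [CompleteSpace E]

theorem stable_zero_apply_greenIntegral (h : IsExpDichotomy S U M ε) (hp : 1 ≤ p)
    (hf : MemLp f p) (t : ℝ) : S 0 (greenIntegral S U f t) = duhamel S f t := by
  rw [h.greenIntegral_eq_sub hp hf, Pi.sub_apply, map_sub, h.stable.zero_apply_duhamel hp hf,
    ← h.unstable.zero_apply_backwardDuhamel hp hf, h.stable_zero_apply_unstable, sub_zero]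

theorem unstable_zero_apply_greenIntegral (h : IsExpDichotomy S U M ε) (hp : 1 ≤ p)
    (hf : MemLp f p) (t : ℝ) : U 0 (greenIntegral S U f t) = -backwardDuhamel U f t := by
  rw [h.greenIntegral_eq_sub hp hf, Pi.sub_apply, map_sub,
    h.unstable.zero_apply_backwardDuhamel hp hf, ← h.stable.zero_apply_duhamel hp hf,
    h.unstable_zero_apply_stable, zero_sub]

theorem stable_zero_apply_greenIntegral_eq_add (h : IsExpDichotomy S U M ε) (hp : 1 ≤ p)
    (hf : MemLp f p) (s : ℝ) (t : ℝ≥0) : S 0 (greenIntegral S U f s) =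
      S t (greenIntegral S U f (s - t)) + ∫ θ in (s - t)..s, S (s - θ).toNNReal (f θ) := by
  rw [← h.stable.apply_zero_apply t, h.stable_zero_apply_greenIntegral hp hf,
    h.stable_zero_apply_greenIntegral hp hf]
  exact h.stable.duhamel_eq_add hp hf s t

theorem unstable_zero_apply_greenIntegral_eq_sub (h : IsExpDichotomy S U M ε) (hp : 1 ≤ p)
    (hf : MemLp f p) (s : ℝ) (t : ℝ≥0) : U 0 (greenIntegral S U f s) =
      U t (greenIntegral S U f (s + t)) - ∫ θ in s..(s + t), U (θ - s).toNNReal (f θ) := by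
  rw [← h.unstable.apply_zero_apply t, h.unstable_zero_apply_greenIntegral hp hf,
    h.unstable_zero_apply_greenIntegral hp hf, h.unstable.backwardDuhamel_eq_add hp hf s t,
    map_neg, neg_add']

theorem eLpNorm_stable_zero_apply_greenIntegral_le (h : IsExpDichotomy S U M ε) (hp : 1 ≤ p)
    (hf : MemLp f p) : eLpNorm (fun t => S 0 (greenIntegral S U f t)) p ≤
      ENNReal.ofReal (M / ε) * eLpNorm (fun t => S 0 (f t)) p := by
  simpa only [h.stable_zero_apply_greenIntegral hp hf] using h.stable.eLpNorm_duhamel_le hp hf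

theorem eLpNorm_unstable_zero_apply_greenIntegral_le (h : IsExpDichotomy S U M ε) (hp : 1 ≤ p)
    (hf : MemLp f p) : eLpNorm (fun t => U 0 (greenIntegral S U f t)) p ≤
      ENNReal.ofReal (M / ε) * eLpNorm (fun t => U 0 (f t)) p := by
  have hz : (fun t => U 0 (greenIntegral S U f t)) = -backwardDuhamel U f :=
    funext (h.unstable_zero_apply_greenIntegral hp hf)
  rw [hz, eLpNorm_neg]
  exact h.unstable.eLpNorm_backwardDuhamel_le hp hf

end IsExpDichotomy

/-- The degenerate semigroup `t ↦ G(t) P` on `E` attached to a semigroup `G` on the closed subspace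
onto which `P` projects. -/
def compProjection (G : ℝ → E →L[ℝ] E) (P : E →L[ℝ] E) (t : ℝ≥0) : E →L[ℝ] E :=
  G t ∘L P

theorem compProjection_toNNReal_apply (G : ℝ → E →L[ℝ] E) (P : E →L[ℝ] E) {r : ℝ} (hr : 0 ≤ r)
    (x : E) : compProjection G P r.toNNReal x = G r (P x) := by
  rw [compProjection, Real.coe_toNNReal r hr, ContinuousLinearMap.comp_apply]

theorem intervalIntegral_compProjection_sub_left (G : ℝ → E →L[ℝ] E) (P : E →L[ℝ] E) (f : ℝ → E)
    {a b : ℝ} (hab : a ≤ b) :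
    ∫ θ in a..b, compProjection G P (b - θ).toNNReal (f θ) = ∫ θ in a..b, G (b - θ) (P (f θ)) :=
  intervalIntegral.integral_congr fun θ hθ =>
    compProjection_toNNReal_apply G P (sub_nonneg.2 (uIcc_of_le hab ▸ hθ).2) (f θ)

theorem intervalIntegral_compProjection_sub_right (G : ℝ → E →L[ℝ] E) (P : E →L[ℝ] E) (f : ℝ → E)
    {a b : ℝ} (hab : a ≤ b) :
    ∫ θ in a..b, compProjection G P (θ - a).toNNReal (f θ) = ∫ θ in a..b, G (θ - a) (P (f θ)) :=
  intervalIntegral.integral_congr fun θ hθ =>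
    compProjection_toNNReal_apply G P (sub_nonneg.2 (uIcc_of_le hab ▸ hθ).1) (f θ)

theorem greenKernel_compProjection_apply (Gs Gb : ℝ → E →L[ℝ] E) (Ps Pb : E →L[ℝ] E) (t s : ℝ)
    (x : E) : greenKernel (compProjection Gs Ps) (compProjection Gb Pb) t s x =
      if s < t then Gs (t - s) (Ps x) else -Gb (s - t) (Pb x) := by
  rw [greenKernel]
  split_ifs with hst
  · exact compProjection_toNNReal_apply Gs Ps (sub_nonneg.2 hst.le) x
  · rw [neg_apply,
      compProjection_toNNReal_apply Gb Pb (sub_nonneg.2 (not_lt.1 hst))]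

theorem compProjection_zero_apply {V : Submodule ℝ E} {G : ℝ → E →L[ℝ] E} {P : E →L[ℝ] E}
    (hP_mem : ∀ x, P x ∈ V) (hG_zero : ∀ x ∈ V, G 0 x = x) (x : E) :
    compProjection G P 0 x = P x :=
  hG_zero (P x) (hP_mem x)

theorem isExpDecaySemigroup_compProjection {V : Submodule ℝ E} {G : ℝ → E →L[ℝ] E}
    {P : E →L[ℝ] E} {M ε : ℝ} (hP_mem : ∀ x, P x ∈ V) (hP_id : ∀ x ∈ V, P x = x)
    (hG_zero : ∀ x ∈ V, G 0 x = x) (hG_mem : ∀ t, 0 ≤ t → ∀ x ∈ V, G t x ∈ V)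
    (hG_add : ∀ t, 0 ≤ t → ∀ s, 0 ≤ s → ∀ x ∈ V, G (t + s) x = G t (G s x))
    (hG_cont : ∀ x ∈ V, ContinuousOn (fun t => G t x) (Ici 0)) (hM : 0 ≤ M) (hε : 0 < ε)
    (hG_decay : ∀ t, 0 ≤ t → ∀ x ∈ V, ‖G t x‖ ≤ M * Real.exp (-ε * t) * ‖x‖) :
    IsExpDecaySemigroup (compProjection G P) M ε where
  bound_nonneg := hM
  rate_pos := hε
  add_apply s t x := by
    simp only [compProjection, ContinuousLinearMap.comp_apply, NNReal.coe_add]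
    rw [hG_add s s.2 t t.2 _ (hP_mem x), hP_id _ (hG_mem t t.2 _ (hP_mem x))]
  continuous_apply x :=
    (hG_cont (P x) (hP_mem x)).comp_continuous NNReal.continuous_coe fun t => t.2
  norm_apply_le t x := by
    rw [compProjection_zero_apply hP_mem hG_zero]
    exact hG_decay t t.2 (P x) (hP_mem x)

end Dichotomy

theorem stmt9_general {E : Type*} [NormedAddCommGroup E] [NormedSpace ℝ E] [CompleteSpace E]
    (Hs Hb : Submodule ℝ E) (Ps Pb : E →L[ℝ] E)
    (hPs_mem : ∀ x, Ps x ∈ Hs) (hPb_mem : ∀ x, Pb x ∈ Hb)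
    (hsum : ∀ x, Ps x + Pb x = x)
    (hPs_id : ∀ x ∈ Hs, Ps x = x) (hPb_id : ∀ x ∈ Hb, Pb x = x)
    (Gs Gb : ℝ → E →L[ℝ] E)
    (hGs0 : ∀ x ∈ Hs, Gs 0 x = x) (hGb0 : ∀ x ∈ Hb, Gb 0 x = x)
    (hGs_mem : ∀ t, 0 ≤ t → ∀ x ∈ Hs, Gs t x ∈ Hs)
    (hGb_mem : ∀ t, 0 ≤ t → ∀ x ∈ Hb, Gb t x ∈ Hb)
    (hGs_sg : ∀ t, 0 ≤ t → ∀ s, 0 ≤ s → ∀ x ∈ Hs, Gs (t + s) x = Gs t (Gs s x))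
    (hGb_sg : ∀ t, 0 ≤ t → ∀ s, 0 ≤ s → ∀ x ∈ Hb, Gb (t + s) x = Gb t (Gb s x))
    (hGs_cont : ∀ x ∈ Hs, ContinuousOn (fun t => Gs t x) (Ici 0))
    (hGb_cont : ∀ x ∈ Hb, ContinuousOn (fun t => Gb t x) (Ici 0))
    (M ε : ℝ) (hM : 0 ≤ M) (hε : 0 < ε)
    (hGs_decay : ∀ t, 0 ≤ t → ∀ x ∈ Hs, ‖Gs t x‖ ≤ M * Real.exp (-ε * t) * ‖x‖)
    (hGb_decay : ∀ t, 0 ≤ t → ∀ x ∈ Hb, ‖Gb t x‖ ≤ M * Real.exp (-ε * t) * ‖x‖)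
    (p : ℝ≥0∞) (hp : 1 ≤ p) (f : ℝ → E) (hf : MemLp f p) :
    (∀ t : ℝ, Integrable fun s =>
      if s < t then Gs (t - s) (Ps (f s)) else -(Gb (s - t) (Pb (f s)))) ∧
    ∀ z : ℝ → E,
      (∀ t, z t = ∫ s, if s < t then Gs (t - s) (Ps (f s)) else -(Gb (s - t) (Pb (f s)))) →
      Continuous z ∧ (∃ C, ∀ t, ‖z t‖ ≤ C) ∧ MemLp z p ∧
      (∀ s t : ℝ, 0 ≤ t →
        Ps (z s) = Gs t (Ps (z (s - t))) + ∫ θ in (s - t)..s, Gs (s - θ) (Ps (f θ)) ∧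
        Pb (z s) = Gb t (Pb (z (s + t))) - ∫ θ in s..(s + t), Gb (θ - s) (Pb (f θ))) ∧
      eLpNorm (fun t => Ps (z t)) p ≤ ENNReal.ofReal (M / ε) * eLpNorm (fun t => Ps (f t)) p ∧
      eLpNorm (fun t => Pb (z t)) p ≤ ENNReal.ofReal (M / ε) * eLpNorm (fun t => Pb (f t)) p := by
  have hPs := compProjection_zero_apply hPs_mem hGs0
  have hPb := compProjection_zero_apply hPb_mem hGb0
  have h : IsExpDichotomy (compProjection Gs Ps) (compProjection Gb Pb) M ε :=
    { stable := isExpDecaySemigroup_compProjection hPs_mem hPs_id hGs0 hGs_mem hGs_sg hGs_cont hM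
        hε hGs_decay
      unstable := isExpDecaySemigroup_compProjection hPb_mem hPb_id hGb0 hGb_mem hGb_sg hGb_cont hM
        hε hGb_decay
      zero_apply_add_zero_apply := by simpa only [hPs, hPb] using hsum }
  simp only [← greenKernel_compProjection_apply]
  refine ⟨h.integrable_greenKernel_apply hp hf, fun z hz => ?_⟩
  obtain rfl : z = greenIntegral (compProjection Gs Ps) (compProjection Gb Pb) f := funext hz
  refine ⟨h.continuous_greenIntegral hp hf, h.exists_norm_greenIntegral_le hp hf,
    h.memLp_greenIntegral hp hf, fun s t ht => ?_,
    by simpa only [hPs] using h.eLpNorm_stable_zero_apply_greenIntegral_le hp hf,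
    by simpa only [hPb] using h.eLpNorm_unstable_zero_apply_greenIntegral_le hp hf⟩
  lift t to ℝ≥0 using ht
  have hleft : s - t ≤ s := sub_le_self s t.2
  have hright : s ≤ s + t := le_add_of_nonneg_right t.2
  rw [← hPs, ← hPb, ← intervalIntegral_compProjection_sub_left Gs Ps f hleft,
    ← intervalIntegral_compProjection_sub_right Gb Pb f hright]
  exact ⟨h.stable_zero_apply_greenIntegral_eq_add hp hf s t,
    h.unstable_zero_apply_greenIntegral_eq_sub hp hf s t⟩

/-- exponential dichotomy setting.  With the Green kernel
`F(t, s) = Gs(t-s) Ps` for `t > s` and `F(t, s) = -Gb(s-t) Pb` for `t < s`,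
for every `f ∈ L²(ℝ; H)` the integral `z(t) = ∫ F(t, s) f(s) ds` converges absolutely
for every `t`, the resulting function `z` is bounded and continuous, belongs to
`L²(ℝ; H)`, is a mild dichotomous solution of the inhomogeneous equation with
inhomogeneity `f`, and satisfies `‖Ps z‖_{L²} ≤ (M/ε) ‖Ps f‖_{L²}` and
`‖Pb z‖_{L²} ≤ (M/ε) ‖Pb f‖_{L²}`. -/
theorem stmt9 {H : Type*} [NormedAddCommGroup H] [InnerProductSpace ℝ H] [CompleteSpace H]
    (Hs Hb : Submodule ℝ H) (hHsC : IsClosed (Hs : Set H)) (hHbC : IsClosed (Hb : Set H))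
    (hdisj : Hs ⊓ Hb = ⊥) (hspan : Hs ⊔ Hb = ⊤)
    (Ps Pb : H →L[ℝ] H)
    (hPs_mem : ∀ x, Ps x ∈ Hs) (hPb_mem : ∀ x, Pb x ∈ Hb)
    (hsum : ∀ x, Ps x + Pb x = x)
    (hPs_id : ∀ x ∈ Hs, Ps x = x) (hPb_id : ∀ x ∈ Hb, Pb x = x)
    (Gs Gb : ℝ → H →L[ℝ] H)
    (hGs0 : ∀ x ∈ Hs, Gs 0 x = x) (hGb0 : ∀ x ∈ Hb, Gb 0 x = x)
    (hGs_mem : ∀ t, 0 ≤ t → ∀ x ∈ Hs, Gs t x ∈ Hs)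
    (hGb_mem : ∀ t, 0 ≤ t → ∀ x ∈ Hb, Gb t x ∈ Hb)
    (hGs_sg : ∀ t, 0 ≤ t → ∀ s, 0 ≤ s → ∀ x ∈ Hs, Gs (t + s) x = Gs t (Gs s x))
    (hGb_sg : ∀ t, 0 ≤ t → ∀ s, 0 ≤ s → ∀ x ∈ Hb, Gb (t + s) x = Gb t (Gb s x))
    (hGs_cont : ∀ x ∈ Hs, ContinuousOn (fun t => Gs t x) (Set.Ici (0 : ℝ)))
    (hGb_cont : ∀ x ∈ Hb, ContinuousOn (fun t => Gb t x) (Set.Ici (0 : ℝ)))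
    (M ε : ℝ) (hM : 0 < M) (hε : 0 < ε)
    (hGs_decay : ∀ t, 0 ≤ t → ∀ x ∈ Hs, ‖Gs t x‖ ≤ M * Real.exp (-ε * t) * ‖x‖)
    (hGb_decay : ∀ t, 0 ≤ t → ∀ x ∈ Hb, ‖Gb t x‖ ≤ M * Real.exp (-ε * t) * ‖x‖)
    (f : ℝ → H) (hf : MemLp f 2 (volume : Measure ℝ)) :
    (∀ t : ℝ, Integrable
      (fun s => if s < t then Gs (t - s) (Ps (f s)) else -(Gb (s - t) (Pb (f s))))
      (volume : Measure ℝ)) ∧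
    (∀ z : ℝ → H,
      (∀ t : ℝ, z t =
        ∫ s, (if s < t then Gs (t - s) (Ps (f s)) else -(Gb (s - t) (Pb (f s))))
          ∂(volume : Measure ℝ)) →
      Continuous z ∧ (∃ C, ∀ t, ‖z t‖ ≤ C) ∧ MemLp z 2 (volume : Measure ℝ) ∧
      (∀ s : ℝ, ∀ t : ℝ, 0 ≤ t →
        Ps (z s) = Gs t (Ps (z (s - t))) + ∫ θ in (s - t)..s, Gs (s - θ) (Ps (f θ)) ∧
        Pb (z s) = Gb t (Pb (z (s + t))) - ∫ θ in s..(s + t), Gb (θ - s) (Pb (f θ))) ∧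
      eLpNorm (fun t => Ps (z t)) 2 (volume : Measure ℝ) ≤
        ENNReal.ofReal (M / ε) * eLpNorm (fun t => Ps (f t)) 2 (volume : Measure ℝ) ∧
      eLpNorm (fun t => Pb (z t)) 2 (volume : Measure ℝ) ≤
        ENNReal.ofReal (M / ε) * eLpNorm (fun t => Pb (f t)) 2 (volume : Measure ℝ)) :=
  stmt9_general Hs Hb Ps Pb hPs_mem hPb_mem hsum hPs_id hPb_id Gs Gb hGs0 hGb0 hGs_mem hGb_mem
    hGs_sg hGb_sg hGs_cont hGb_cont M ε hM.le hε hGs_decay hGb_decay 2 one_le_two f hf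
end

section
/- In the exponential dichotomy setting, let f ∈ L²(ℝ; H) and let z : ℝ → H be a mild dichotomous solution of the inhomogeneous equation with inhomogeneity f. If z ∈ L²(ℝ; H) (with the defining relations holding for almost every s), or if z is bounded and continuous on ℝ, then z coincides (almost everywhere, respectively everywhere) with the function t ↦ ∫_{−∞}^{t} G♯(t − s) Π♯ f(s) ds − ∫_{t}^{∞} G♭(s − t) Π♭ f(s) ds. -/
open MeasureTheory

/-
The `♯`-component of the defining relation reads `Ps z(s) = K(t) w(t) + ∫₀ᵗ K(τ) g(τ) dτ` with
`K = Gs ∘ Ps`, `w(t) = z(s - t)` and `g(τ) = f(s - τ)`; the `♭`-component has the same shape with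
`K = Gb ∘ Pb`, `w(t) = z(s + t)` and `g(τ) = -f(s + τ)`. By Hölder's inequality the integrals
converge as `t → ∞`, hence so does `K(t) w(t)`. Since `w` is bounded along some sequence of times
tending to infinity (an `L²` function has norm at most `1` outside a set of finite measure) and
`‖K(t)‖ → 0`, the limit of `K(t) w(t)` is zero.
-/

section GreenRepresentation

open Filter Set Topology
open scoped ENNReal

theorem exists_measure_norm_gt_lt_top_of_memLp {α E : Type*} [MeasurableSpace α] {μ : Measure α}
    [NormedAddCommGroup E] {w : α → E} {r : ℝ≥0∞} (hr : r ≠ 0) (hw : MemLp w r μ) :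
    ∃ B : ℝ, μ {t | B < ‖w t‖} < ∞ := by
  rcases eq_or_ne r ∞ with rfl | hr_top
  · have hfin : eLpNormEssSup w μ ≠ ∞ := by
      simpa only [eLpNorm_exponent_top] using hw.eLpNorm_ne_top
    have hB : ∀ᵐ t ∂μ, ‖w t‖ ≤ (eLpNormEssSup w μ).toReal := by
      filter_upwards [ae_le_eLpNormEssSup (f := w) (μ := μ)] with t ht
      simpa only [toReal_enorm] using ENNReal.toReal_mono hfin ht
    refine ⟨(eLpNormEssSup w μ).toReal, ?_⟩
    simp only [ae_iff, not_le] at hB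
    rw [hB]
    exact ENNReal.zero_lt_top
  · refine ⟨1, (measure_mono fun t ht => ?_).trans_lt (hw.meas_ge_lt_top hr hr_top one_ne_zero)⟩
    exact NNReal.coe_le_coe.1 (mem_ofPred.1 ht).le

theorem frequently_atTop_of_volume_compl_lt_top {s : Set ℝ} (hs : volume sᶜ < ∞) :
    ∃ᶠ t in atTop, t ∈ s := by
  intro hcompl
  obtain ⟨T, hT⟩ := eventually_atTop.1 hcompl
  refine hs.not_ge ?_
  calc ∞ = volume (Ici T) := Real.volume_Ici.symm
    _ ≤ volume sᶜ := measure_mono hT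

theorem exists_frequently_norm_le_of_memLp {E : Type*} [NormedAddCommGroup E] {w : ℝ → E}
    {r : ℝ≥0∞} (hr : r ≠ 0) (hw : MemLp w r) : ∃ B : ℝ, ∃ᶠ t in atTop, ‖w t‖ ≤ B := by
  obtain ⟨B, hB⟩ := exists_measure_norm_gt_lt_top_of_memLp hr hw
  refine ⟨B, frequently_atTop_of_volume_compl_lt_top (s := {t | ‖w t‖ ≤ B}) ?_⟩
  simpa only [compl_ofPred, not_le] using hB

theorem eq_zero_of_tendsto_clm_apply_of_frequently_norm_le {ι E F : Type*}
    [NormedAddCommGroup E] [NormedSpace ℝ E] [NormedAddCommGroup F] [NormedSpace ℝ F]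
    {l : Filter ι} {K : ι → E →L[ℝ] F} {w : ι → E} {B : ℝ} {y : F}
    (hK : Tendsto (fun t => ‖K t‖) l (𝓝 0)) (hw : ∃ᶠ t in l, ‖w t‖ ≤ B)
    (hy : Tendsto (fun t => K t (w t)) l (𝓝 y)) : y = 0 := by
  -- Frequent boundedness is boundedness along the nontrivial filter `l ⊓ 𝓟 {t | ‖w t‖ ≤ B}`.
  have : NeBot (l ⊓ 𝓟 {t | ‖w t‖ ≤ B}) := frequently_mem_iff_neBot.1 hw
  refine tendsto_nhds_unique (hy.mono_left (inf_le_left (b := 𝓟 {t | ‖w t‖ ≤ B}))) ?_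
  have hKB : Tendsto (fun t => ‖K t‖ * B) (l ⊓ 𝓟 {t | ‖w t‖ ≤ B}) (𝓝 0) := by
    simpa only [zero_mul] using (hK.mono_left inf_le_left).mul_const B
  refine squeeze_zero_norm' ?_ hKB
  filter_upwards [mem_inf_of_right (mem_principal_self {t | ‖w t‖ ≤ B})] with t ht
  exact (K t).le_opNorm_of_le ht

theorem memLp_exp_neg_mul_Ioi {ε : ℝ} (hε : 0 < ε) (q : ℝ≥0∞) (a : ℝ) :
    MemLp (fun t => Real.exp (-ε * t)) q (volume.restrict (Ioi a)) := by
  have hmeas : AEStronglyMeasurable (fun t => Real.exp (-ε * t)) (volume.restrict (Ioi a)) := by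
    fun_prop
  rcases eq_or_ne q 0 with rfl | hq_zero
  · exact memLp_zero_iff_aestronglyMeasurable.2 hmeas
  rcases eq_or_ne q ∞ with rfl | hq_top
  · refine memLp_top_of_bound hmeas (Real.exp (-ε * a)) ?_
    filter_upwards [ae_restrict_mem measurableSet_Ioi] with t ht
    rw [Real.norm_of_nonneg (Real.exp_nonneg _), Real.exp_le_exp]
    exact mul_le_mul_of_nonpos_left (mem_Ioi.1 ht).le (neg_nonpos.2 hε.le)
  · rw [← integrable_norm_rpow_iff hmeas hq_zero hq_top]
    have hrate : -ε * q.toReal < 0 :=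
      mul_neg_of_neg_of_pos (neg_lt_zero.2 hε) (ENNReal.toReal_pos hq_zero hq_top)
    refine (integrableOn_exp_mul_Ioi hrate a).congr (.of_forall fun t => ?_)
    simp only [Real.norm_of_nonneg (Real.exp_nonneg _), ← Real.exp_mul]
    ring_nf

theorem setIntegral_Ioi_comp_const_sub {E : Type*} [NormedAddCommGroup E] [NormedSpace ℝ E]
    (φ : ℝ → E) (s a : ℝ) : ∫ τ in Ioi a, φ (s - τ) = ∫ θ in Iic (s - a), φ θ := by
  have h := (Measure.measurePreserving_sub_left volume s).setIntegral_preimage_emb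
    (MeasurableEquiv.subLeft s).measurableEmbedding φ (Iio (s - a))
  rwa [preimage_const_sub_Iio, sub_sub_cancel, ← integral_Iic_eq_integral_Iio] at h

theorem setIntegral_Ioi_comp_const_add {E : Type*} [NormedAddCommGroup E] [NormedSpace ℝ E]
    (φ : ℝ → E) (s a : ℝ) : ∫ τ in Ioi a, φ (s + τ) = ∫ θ in Ioi (s + a), φ θ := by
  have h := (measurePreserving_add_left volume s).setIntegral_preimage_emb
    (MeasurableEquiv.addLeft s).measurableEmbedding φ (Ioi (s + a))
  rwa [preimage_const_add_Ioi, add_sub_cancel_left] at h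

/-- Strongly continuous, exponentially decaying families of operators on the half-line. The families
to keep in mind are `t ↦ G t ∘L P` with `G` a stable semigroup on the range of a projector `P`;
composing with `P` makes all operators everywhere defined. -/
structure HasExpDecay {E F : Type*} [NormedAddCommGroup E] [NormedSpace ℝ E]
    [NormedAddCommGroup F] [NormedSpace ℝ F] (K : ℝ → E →L[ℝ] F) (C ε : ℝ) : Prop where
  rate_pos : 0 < ε
  continuousOn_apply : ∀ x, ContinuousOn (fun t => K t x) (Ici 0)
  opNorm_le : ∀ t, 0 ≤ t → ‖K t‖ ≤ C * Real.exp (-ε * t)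

namespace HasExpDecay

variable {E F : Type*} [NormedAddCommGroup E] [NormedSpace ℝ E] [NormedAddCommGroup F]
  [NormedSpace ℝ F] {K : ℝ → E →L[ℝ] F} {C ε : ℝ}

theorem comp_of_forall_mem {F' : Type*} [NormedAddCommGroup F'] [NormedSpace ℝ F']
    {G : ℝ → F →L[ℝ] F'} {P : E →L[ℝ] F} {V : Set F} {M : ℝ} (hM : 0 ≤ M) (hε : 0 < ε)
    (hP : ∀ x, P x ∈ V) (hG_cont : ∀ y ∈ V, ContinuousOn (fun t => G t y) (Ici 0))
    (hG_decay : ∀ t, 0 ≤ t → ∀ y ∈ V, ‖G t y‖ ≤ M * Real.exp (-ε * t) * ‖y‖) :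
    HasExpDecay (fun t => G t ∘L P) (M * ‖P‖) ε where
  rate_pos := hε
  continuousOn_apply x := hG_cont _ (hP x)
  opNorm_le t ht := by
    refine ContinuousLinearMap.opNorm_le_bound _ (by positivity) fun x => ?_
    calc ‖G t (P x)‖ ≤ M * Real.exp (-ε * t) * ‖P x‖ := hG_decay t ht _ (hP x)
      _ ≤ M * Real.exp (-ε * t) * (‖P‖ * ‖x‖) := by gcongr; exact P.le_opNorm x
      _ = M * ‖P‖ * Real.exp (-ε * t) * ‖x‖ := by ring

theorem tendsto_opNorm_zero (hK : HasExpDecay K C ε) :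
    Tendsto (fun t => ‖K t‖) atTop (𝓝 0) := by
  have hexp : Tendsto (fun t => C * Real.exp (-ε * t)) atTop (𝓝 0) := by
    have hlin : Tendsto (fun t => -ε * t) atTop atBot :=
      tendsto_id.const_mul_atTop_of_neg (neg_lt_zero.2 hK.rate_pos)
    simpa only [mul_zero, Function.comp_apply] using
      (Real.tendsto_exp_atBot.comp hlin).const_mul C
  refine squeeze_zero' (.of_forall fun t => norm_nonneg (K t)) ?_ hexp
  filter_upwards [eventually_ge_atTop 0] with t ht using hK.opNorm_le t ht

theorem opNorm_le_const (hK : HasExpDecay K C ε) {t : ℝ} (ht : 0 ≤ t) : ‖K t‖ ≤ C := by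
  have hC : 0 ≤ C := by simpa using (norm_nonneg (K 0)).trans (hK.opNorm_le 0 le_rfl)
  have hexp : Real.exp (-ε * t) ≤ 1 :=
    Real.exp_le_one_iff.2 (mul_nonpos_of_nonpos_of_nonneg (neg_nonpos.2 hK.rate_pos.le) ht)
  exact (hK.opNorm_le t ht).trans (mul_le_of_le_one_right hC hexp)

theorem continuousOn_uncurry (hK : HasExpDecay K C ε) :
    ContinuousOn (fun q : ℝ × E => K q.1 q.2) (Ici 0 ×ˢ univ) := by
  refine continuousOn_prod_of_continuousOn_lipschitzOnWith' _ C.toNNReal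
    (fun t ht => ?_) (fun x _ => hK.continuousOn_apply x)
  refine ((K t).lipschitz.weaken ?_).lipschitzOnWith
  exact NNReal.le_toNNReal_of_coe_le (hK.opNorm_le_const ht)

theorem aestronglyMeasurable_apply (hK : HasExpDecay K C ε) {g : ℝ → E}
    (hg : AEStronglyMeasurable g (volume.restrict (Ioi 0))) :
    AEStronglyMeasurable (fun t => K t (g t)) (volume.restrict (Ioi 0)) := by
  have hcont : Continuous fun q : ℝ × E => K (max q.1 0) q.2 :=
    hK.continuousOn_uncurry.comp_continuous (f := fun q : ℝ × E => (max q.1 0, q.2))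
      (by fun_prop) fun q => ⟨mem_Ici.2 (le_max_right _ _), mem_univ _⟩
  refine (hcont.comp_aestronglyMeasurable (aestronglyMeasurable_id.prodMk hg)).congr ?_
  filter_upwards [ae_restrict_mem measurableSet_Ioi] with t ht
  simp only [id_eq, max_eq_left (mem_Ioi.1 ht).le]

theorem integrableOn_apply (hK : HasExpDecay K C ε) {p : ℝ≥0∞} (hp : 1 ≤ p) {g : ℝ → E}
    (hg : MemLp g p) : IntegrableOn (fun t => K t (g t)) (Ioi 0) := by
  have : p.HolderConjugate p.conjExponent := .conjExponent hp
  have hdom : IntegrableOn (fun t => C * (‖g t‖ * Real.exp (-ε * t))) (Ioi 0) :=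
    (hg.norm.restrict (Ioi 0)).integrable_mul
      (memLp_exp_neg_mul_Ioi hK.rate_pos p.conjExponent 0) |>.const_mul C
  refine hdom.mono' (hK.aestronglyMeasurable_apply hg.1.restrict) ?_
  filter_upwards [ae_restrict_mem measurableSet_Ioi] with t ht
  calc ‖K t (g t)‖ ≤ C * Real.exp (-ε * t) * ‖g t‖ :=
        (K t).le_of_opNorm_le (hK.opNorm_le t (mem_Ioi.1 ht).le) _
    _ = C * (‖g t‖ * Real.exp (-ε * t)) := by ring

theorem eq_integral_Ioi (hK : HasExpDecay K C ε) {p : ℝ≥0∞} (hp : 1 ≤ p) {g w : ℝ → E}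
    (hg : MemLp g p) {B : ℝ} (hw : ∃ᶠ t in atTop, ‖w t‖ ≤ B) {y : F}
    (hy : ∀ t, 0 ≤ t → y = K t (w t) + ∫ τ in 0..t, K τ (g τ)) :
    y = ∫ τ in Ioi 0, K τ (g τ) := by
  have hint := intervalIntegral_tendsto_integral_Ioi 0 (hK.integrableOn_apply hp hg) tendsto_id
  refine sub_eq_zero.1 <| eq_zero_of_tendsto_clm_apply_of_frequently_norm_le
    hK.tendsto_opNorm_zero hw ((hint.const_sub y).congr' ?_)
  filter_upwards [eventually_ge_atTop 0] with t ht
  exact sub_eq_of_eq_add (hy t ht)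

theorem eq_integral_Iic (hK : HasExpDecay K C ε) {p : ℝ≥0∞} (hp : 1 ≤ p) {f z : ℝ → E}
    (hf : MemLp f p) {s B : ℝ} (hz : ∃ᶠ t in atTop, ‖z (s - t)‖ ≤ B) {y : F}
    (hy : ∀ t, 0 ≤ t → y = K t (z (s - t)) + ∫ θ in (s - t)..s, K (s - θ) (f θ)) :
    y = ∫ θ in Iic s, K (s - θ) (f θ) := by
  have hg : MemLp (fun τ => f (s - τ)) p :=
    hf.comp_measurePreserving (Measure.measurePreserving_sub_left volume s)
  have hy' : ∀ t, 0 ≤ t → y = K t (z (s - t)) + ∫ τ in 0..t, K τ (f (s - τ)) := by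
    intro t ht
    have hreflect := intervalIntegral.integral_comp_sub_left (fun θ => K (s - θ) (f θ)) s
      (a := 0) (b := t)
    simp only [sub_sub_cancel, sub_zero] at hreflect
    rw [hreflect]
    exact hy t ht
  have hreflect := setIntegral_Ioi_comp_const_sub (fun θ => K (s - θ) (f θ)) s 0
  simp only [sub_sub_cancel, sub_zero] at hreflect
  rw [← hreflect, ← hK.eq_integral_Ioi hp hg hz hy']

theorem eq_neg_integral_Ioi (hK : HasExpDecay K C ε) {p : ℝ≥0∞} (hp : 1 ≤ p) {f z : ℝ → E}
    (hf : MemLp f p) {s B : ℝ} (hz : ∃ᶠ t in atTop, ‖z (s + t)‖ ≤ B) {y : F}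
    (hy : ∀ t, 0 ≤ t → y = K t (z (s + t)) - ∫ θ in s..(s + t), K (θ - s) (f θ)) :
    y = -∫ θ in Ioi s, K (θ - s) (f θ) := by
  have hg : MemLp (fun τ => -f (s + τ)) p :=
    (hf.comp_measurePreserving (measurePreserving_add_left volume s)).neg
  have hy' : ∀ t, 0 ≤ t → y = K t (z (s + t)) + ∫ τ in 0..t, K τ (-f (s + τ)) := by
    intro t ht
    have hshift := intervalIntegral.integral_comp_add_left (fun θ => K (θ - s) (f θ)) s
      (a := 0) (b := t)
    simp only [add_sub_cancel_left, add_zero] at hshift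
    simp only [map_neg, intervalIntegral.integral_neg, hshift, ← sub_eq_add_neg]
    exact hy t ht
  have hshift := setIntegral_Ioi_comp_const_add (fun θ => K (θ - s) (f θ)) s 0
  simp only [add_sub_cancel_left, add_zero] at hshift
  rw [← hshift, hK.eq_integral_Ioi hp hg hz hy']
  simp only [map_neg, integral_neg]

end HasExpDecay

section Dichotomy

variable {E : Type*} [NormedAddCommGroup E] [NormedSpace ℝ E]

/-- The two variation-of-constants identities at time `s` that make `z` a mild dichotomous solution
with inhomogeneity `f`. Here `Gs`, `Gb` are extensions to the whole space of the semigroups on the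
ranges of `Ps`, `Pb`. -/
def IsMildDichotomousAt (Ps Pb : E →L[ℝ] E) (Gs Gb : ℝ → E →L[ℝ] E) (f z : ℝ → E) (s : ℝ) : Prop :=
  ∀ t : ℝ, 0 ≤ t →
    Ps (z s) = Gs t (Ps (z (s - t))) + ∫ θ in (s - t)..s, Gs (s - θ) (Ps (f θ)) ∧
    Pb (z s) = Gb t (Pb (z (s + t))) - ∫ θ in s..(s + t), Gb (θ - s) (Pb (f θ))

/-- The convolution of `f` with the Green function of the dichotomy, which is `Gs ∘ Ps` forward in
time and `-Gb ∘ Pb` backward in time. -/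
noncomputable def dichotomyGreenIntegral (Ps Pb : E →L[ℝ] E) (Gs Gb : ℝ → E →L[ℝ] E)
    (f : ℝ → E) (t : ℝ) : E :=
  (∫ s in Iic t, Gs (t - s) (Ps (f s))) - ∫ s in Ioi t, Gb (s - t) (Pb (f s))

variable {Ps Pb : E →L[ℝ] E} {Gs Gb : ℝ → E →L[ℝ] E} {Cs Cb εs εb : ℝ} {p : ℝ≥0∞} {f z : ℝ → E}

theorem IsMildDichotomousAt.eq_dichotomyGreenIntegral (hsum : ∀ x, Ps x + Pb x = x)
    (hs : HasExpDecay (fun t => Gs t ∘L Ps) Cs εs) (hb : HasExpDecay (fun t => Gb t ∘L Pb) Cb εb)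
    (hp : 1 ≤ p) (hf : MemLp f p) {s Bs Bb : ℝ} (hz : IsMildDichotomousAt Ps Pb Gs Gb f z s)
    (hz_bot : ∃ᶠ t in atTop, ‖z (s - t)‖ ≤ Bs) (hz_top : ∃ᶠ t in atTop, ‖z (s + t)‖ ≤ Bb) :
    z s = dichotomyGreenIntegral Ps Pb Gs Gb f s := by
  have hPs : Ps (z s) = ∫ θ in Iic s, Gs (s - θ) (Ps (f θ)) :=
    hs.eq_integral_Iic hp hf hz_bot fun t ht => (hz t ht).1
  have hPb : Pb (z s) = -∫ θ in Ioi s, Gb (θ - s) (Pb (f θ)) :=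
    hb.eq_neg_integral_Ioi hp hf hz_top fun t ht => (hz t ht).2
  rw [← hsum (z s), hPs, hPb, ← sub_eq_add_neg, dichotomyGreenIntegral]

theorem stmt10_general [CompleteSpace E] (hsum : ∀ x, Ps x + Pb x = x)
    (hs : HasExpDecay (fun t => Gs t ∘L Ps) Cs εs) (hb : HasExpDecay (fun t => Gb t ∘L Pb) Cb εb)
    (hp : 1 ≤ p) (hf : MemLp f p) :
    (∀ (z : ℝ → E) (r : ℝ≥0∞), r ≠ 0 → MemLp z r →
      (∀ᵐ s, IsMildDichotomousAt Ps Pb Gs Gb f z s) →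
      ∀ᵐ s, z s = dichotomyGreenIntegral Ps Pb Gs Gb f s) ∧
    (∀ z : ℝ → E, (∃ C, ∀ t, ‖z t‖ ≤ C) →
      (∀ s, IsMildDichotomousAt Ps Pb Gs Gb f z s) →
      ∀ s, z s = dichotomyGreenIntegral Ps Pb Gs Gb f s) := by
  refine ⟨fun z r hr hz hmild => ?_, fun z ⟨C, hC⟩ hmild s => ?_⟩
  · filter_upwards [hmild] with s hs_mild
    obtain ⟨Bs, hBs⟩ := exists_frequently_norm_le_of_memLp hr
      (hz.comp_measurePreserving (Measure.measurePreserving_sub_left volume s))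
    obtain ⟨Bb, hBb⟩ := exists_frequently_norm_le_of_memLp hr
      (hz.comp_measurePreserving (measurePreserving_add_left volume s))
    exact hs_mild.eq_dichotomyGreenIntegral hsum hs hb hp hf hBs hBb
  · exact (hmild s).eq_dichotomyGreenIntegral hsum hs hb hp hf
      (Frequently.of_forall fun _ => hC _) (Frequently.of_forall fun _ => hC _)

end Dichotomy

end GreenRepresentation

/-- exponential dichotomy setting.  Let `f ∈ L²(ℝ; H)` and let
`z : ℝ → H` be a mild dichotomous solution of the inhomogeneous equation with
inhomogeneity `f`, i.e. for all (resp. a.e.) `s` and all `t ≥ 0`: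
`Ps z(s) = Gs(t) Ps z(s-t) + ∫_{s-t}^{s} Gs(s-θ) Ps f(θ) dθ` and
`Pb z(s) = Gb(t) Pb z(s+t) - ∫_{s}^{s+t} Gb(θ-s) Pb f(θ) dθ`.
If `z ∈ L²(ℝ; H)` (relations a.e.) or `z` is bounded and continuous, then `z`
coincides (a.e., resp. everywhere) with
`t ↦ ∫_{-∞}^{t} Gs(t-s) Ps f(s) ds − ∫_{t}^{∞} Gb(s-t) Pb f(s) ds`. -/
theorem stmt10 {H : Type*} [NormedAddCommGroup H] [InnerProductSpace ℝ H] [CompleteSpace H]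
    (Hs Hb : Submodule ℝ H) (hHsC : IsClosed (Hs : Set H)) (hHbC : IsClosed (Hb : Set H))
    (hdisj : Hs ⊓ Hb = ⊥) (hspan : Hs ⊔ Hb = ⊤)
    (Ps Pb : H →L[ℝ] H)
    (hPs_mem : ∀ x, Ps x ∈ Hs) (hPb_mem : ∀ x, Pb x ∈ Hb)
    (hsum : ∀ x, Ps x + Pb x = x)
    (hPs_id : ∀ x ∈ Hs, Ps x = x) (hPb_id : ∀ x ∈ Hb, Pb x = x)
    (Gs Gb : ℝ → H →L[ℝ] H)
    (hGs0 : ∀ x ∈ Hs, Gs 0 x = x) (hGb0 : ∀ x ∈ Hb, Gb 0 x = x)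
    (hGs_mem : ∀ t, 0 ≤ t → ∀ x ∈ Hs, Gs t x ∈ Hs)
    (hGb_mem : ∀ t, 0 ≤ t → ∀ x ∈ Hb, Gb t x ∈ Hb)
    (hGs_sg : ∀ t, 0 ≤ t → ∀ s, 0 ≤ s → ∀ x ∈ Hs, Gs (t + s) x = Gs t (Gs s x))
    (hGb_sg : ∀ t, 0 ≤ t → ∀ s, 0 ≤ s → ∀ x ∈ Hb, Gb (t + s) x = Gb t (Gb s x))
    (hGs_cont : ∀ x ∈ Hs, ContinuousOn (fun t => Gs t x) (Set.Ici (0 : ℝ)))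
    (hGb_cont : ∀ x ∈ Hb, ContinuousOn (fun t => Gb t x) (Set.Ici (0 : ℝ)))
    (M ε : ℝ) (hM : 0 < M) (hε : 0 < ε)
    (hGs_decay : ∀ t, 0 ≤ t → ∀ x ∈ Hs, ‖Gs t x‖ ≤ M * Real.exp (-ε * t) * ‖x‖)
    (hGb_decay : ∀ t, 0 ≤ t → ∀ x ∈ Hb, ‖Gb t x‖ ≤ M * Real.exp (-ε * t) * ‖x‖)
    (f : ℝ → H) (hf : MemLp f 2 (volume : Measure ℝ)) :
    (∀ z : ℝ → H, MemLp z 2 (volume : Measure ℝ) →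
      (∀ᵐ s ∂(volume : Measure ℝ), ∀ t : ℝ, 0 ≤ t →
        Ps (z s) = Gs t (Ps (z (s - t))) + ∫ θ in (s - t)..s, Gs (s - θ) (Ps (f θ)) ∧
        Pb (z s) = Gb t (Pb (z (s + t))) - ∫ θ in s..(s + t), Gb (θ - s) (Pb (f θ))) →
      (∀ᵐ t ∂(volume : Measure ℝ), z t =
        (∫ s in Set.Iic t, Gs (t - s) (Ps (f s)) ∂(volume : Measure ℝ)) -
        (∫ s in Set.Ioi t, Gb (s - t) (Pb (f s)) ∂(volume : Measure ℝ)))) ∧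
    (∀ z : ℝ → H, Continuous z → (∃ C, ∀ t, ‖z t‖ ≤ C) →
      (∀ s : ℝ, ∀ t : ℝ, 0 ≤ t →
        Ps (z s) = Gs t (Ps (z (s - t))) + ∫ θ in (s - t)..s, Gs (s - θ) (Ps (f θ)) ∧
        Pb (z s) = Gb t (Pb (z (s + t))) - ∫ θ in s..(s + t), Gb (θ - s) (Pb (f θ))) →
      (∀ t : ℝ, z t =
        (∫ s in Set.Iic t, Gs (t - s) (Ps (f s)) ∂(volume : Measure ℝ)) -
        (∫ s in Set.Ioi t, Gb (s - t) (Pb (f s)) ∂(volume : Measure ℝ)))) := by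
  have h := stmt10_general hsum (.comp_of_forall_mem hM.le hε hPs_mem hGs_cont hGs_decay)
    (.comp_of_forall_mem hM.le hε hPb_mem hGb_cont hGb_decay) one_le_two hf
  exact ⟨fun z => h.1 z 2 two_ne_zero, fun z _ => h.2 z⟩
end
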